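/- arXiv:1610.04341 — 7 statements merged into one kernel-verified Lean document; each statement's English description precedes it below -/
import Mathlib

section
/- Suppose that every eigenvalue of ψ is a Weil number of weight j (relative to q) for some integer j (possibly depending on the eigenvalue). Then there exists a family (H_i)_{i ∈ ℤ} of ψ-invariant K-subspaces of H, with H_i = 0 for all but finitely many i, such that H is the internal direct sum of the subspaces H_i and, for each i, the pair (H_i, ψ restricted to H_i) is pure of weight i. -/
open Polynomial

noncomputable section

/-- `α` is a Weil number of weight `i` relative to `q`: it is algebraic over `ℚ` and every
complex root of its minimal polynomial over `ℚ` has absolute value `q ^ (i / 2)`. -/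
def IsWeilNumber {F : Type*} [Field F] [CharZero F] (q : ℕ) (i : ℤ) (α : F) : Prop :=
  IsAlgebraic ℚ α ∧
    ∀ z : ℂ, aeval z (minpoly ℚ α) = 0 → ‖z‖ = (q : ℝ) ^ ((i : ℝ) / 2)

/-- `(H, ψ)` is pure of weight `i` (relative to `q`): every eigenvalue of `ψ`, i.e. every root
of its characteristic polynomial in a fixed algebraic closure of `K`, is a Weil number of
weight `i`. -/
def IsPureOfWeight (q : ℕ) (i : ℤ) {K : Type*} [Field K] [CharZero K]
    {H : Type*} [AddCommGroup H] [Module K H] [FiniteDimensional K H]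
    (ψ : H →ₗ[K] H) : Prop :=
  ∀ α : AlgebraicClosure K, aeval α (LinearMap.charpoly ψ) = 0 → IsWeilNumber q i α

lemma IsWeilNumber.unique {F : Type*} [Field F] [CharZero F] {q : ℕ} (hq : 1 < q) {i j : ℤ} {α : F}
    (hi : IsWeilNumber q i α) (hj : IsWeilNumber q j α) : i = j := by
  have hint : IsIntegral ℚ α := hi.1.isIntegral
  obtain ⟨z, hz⟩ := IsAlgClosed.exists_aeval_eq_zero ℂ (minpoly ℚ α)
    (minpoly.degree_pos hint).ne'
  have h := (hi.2 z hz).symm.trans (hj.2 z hz)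
  have hq' : (1 : ℝ) < q := by exact_mod_cast hq
  have h2 := (Real.rpow_right_inj (by linarith) hq'.ne').1 h
  have h3 : (i : ℝ) = j := by linarith
  exact_mod_cast h3

lemma not_isWeilNumber_zero {F : Type*} [Field F] [CharZero F] {q : ℕ} (hq : 1 < q) {i : ℤ} :
    ¬ IsWeilNumber q i (0 : F) := by
  intro h
  have h1 := h.2 0 (by simp [minpoly.zero])
  have : (0 : ℝ) < (q : ℝ) ^ ((i : ℝ) / 2) := Real.rpow_pos_of_pos (by positivity) _
  rw [norm_zero] at h1
  linarith

lemma IsWeilNumber.conj {K : Type*} [Field K] [CharZero K] {q : ℕ} {i : ℤ}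
    {α β : AlgebraicClosure K} {f : K[X]} (hf : Irreducible f)
    (hα : aeval α f = 0) (hβ : aeval β f = 0) (h : IsWeilNumber q i α) :
    IsWeilNumber q i β := by
  have hint : IsIntegral ℚ α := h.1.isIntegral
  have hd : f ∣ (minpoly ℚ α).map (algebraMap ℚ K) := by
    have h1 : minpoly K α ∣ (minpoly ℚ α).map (algebraMap ℚ K) := by
      apply minpoly.dvd
      rw [aeval_map_algebraMap, minpoly.aeval]
    have h2 : minpoly K α ∣ f := minpoly.dvd _ _ hα
    have h3 : Irreducible (minpoly K α) :=
      minpoly.irreducible (Algebra.IsAlgebraic.isAlgebraic α).isIntegral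
    exact ((h3.associated_of_dvd hf h2).symm.dvd).trans h1
  have h0 : aeval β (minpoly ℚ α) = 0 := by
    rw [← aeval_map_algebraMap K]
    obtain ⟨g, hg⟩ := hd
    rw [hg, map_mul, hβ, zero_mul]
  have he : minpoly ℚ α = minpoly ℚ β :=
    minpoly.eq_of_irreducible_of_monic (minpoly.irreducible hint) h0 (minpoly.monic hint)
  refine ⟨⟨minpoly ℚ α, minpoly.ne_zero hint, h0⟩, ?_⟩
  rw [← he]
  exact h.2

/-- The part of `H` killed by a polynomial in `ψ` with all roots in `S`. -/
def rootPart {K : Type*} [Field K] {H : Type*} [AddCommGroup H] [Module K H]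
    (ψ : H →ₗ[K] H) (S : Set (AlgebraicClosure K)) : Submodule K H where
  carrier := {x | ∃ f : K[X], (∀ α : AlgebraicClosure K, aeval α f = 0 → α ∈ S) ∧
    aeval ψ f x = 0}
  zero_mem' := ⟨1, by simp, by simp⟩
  add_mem' := by
    rintro x y ⟨f, hf, hx⟩ ⟨g, hg, hy⟩
    refine ⟨f * g, ?_, ?_⟩
    · intro α h
      rw [map_mul, mul_eq_zero] at h
      exact h.elim (hf α) (hg α)
    · rw [map_add]
      nth_rw 1 [mul_comm f g]
      rw [map_mul, map_mul, Module.End.mul_apply, Module.End.mul_apply, hx, hy]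
      simp
  smul_mem' := by
    rintro c x ⟨f, hf, hx⟩
    exact ⟨f, hf, by rw [map_smul, hx, smul_zero]⟩

lemma mem_rootPart {K : Type*} [Field K] {H : Type*} [AddCommGroup H] [Module K H]
    {ψ : H →ₗ[K] H} {S : Set (AlgebraicClosure K)} {x : H} :
    x ∈ rootPart ψ S ↔ ∃ f : K[X], (∀ α : AlgebraicClosure K, aeval α f = 0 → α ∈ S) ∧
      aeval ψ f x = 0 := Iff.rfl

lemma rootPart_mono {K : Type*} [Field K] {H : Type*} [AddCommGroup H] [Module K H]
    {ψ : H →ₗ[K] H} {S T : Set (AlgebraicClosure K)} (h : S ⊆ T) :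
    rootPart ψ S ≤ rootPart ψ T := by
  rintro x ⟨f, hf, hx⟩
  exact ⟨f, fun α hα => h (hf α hα), hx⟩

lemma coprime_of_roots {K : Type*} [Field K] {f g : K[X]}
    (h : ∀ α : AlgebraicClosure K, aeval α f = 0 → aeval α g = 0 → False) : IsCoprime f g := by
  rw [Polynomial.isCoprime_iff_aeval_ne_zero_of_isAlgClosed K (AlgebraicClosure K)]
  intro α
  by_contra! hc
  exact h α hc.1 hc.2

lemma rootPart_disjoint {K : Type*} [Field K] {H : Type*} [AddCommGroup H] [Module K H]
    {ψ : H →ₗ[K] H} {S T : Set (AlgebraicClosure K)} (h : Disjoint S T) :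
    Disjoint (rootPart ψ S) (rootPart ψ T) := by
  rw [Submodule.disjoint_def]
  rintro x ⟨f, hf, hx⟩ ⟨g, hg, hy⟩
  have hc : IsCoprime f g := coprime_of_roots fun α h1 h2 =>
    Set.disjoint_left.1 h (hf α h1) (hg α h2)
  exact Submodule.disjoint_def.1 (disjoint_ker_aeval_of_isCoprime ψ hc) x hx hy

lemma rootPart_inv {K : Type*} [Field K] {H : Type*} [AddCommGroup H] [Module K H]
    (ψ : H →ₗ[K] H) (S : Set (AlgebraicClosure K)) :
    ∀ x ∈ rootPart ψ S, ψ x ∈ rootPart ψ S := by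
  rintro x ⟨f, hf, hx⟩
  refine ⟨f, hf, ?_⟩
  have h : aeval ψ (f * X) x = aeval ψ (X * f) x := by rw [mul_comm]
  simpa [hx] using h

lemma aeval_minpoly_of_charpoly {K : Type*} [Field K] {H : Type*} [AddCommGroup H] [Module K H]
    [FiniteDimensional K H] (φ : H →ₗ[K] H) (α : AlgebraicClosure K)
    (h : aeval α φ.charpoly = 0) : aeval α (minpoly K φ) = 0 := by
  have h1 : (LinearMap.charpoly (φ.baseChange (AlgebraicClosure K))).IsRoot α := by
    rw [LinearMap.charpoly_baseChange, IsRoot.def, eval_map_algebraMap, h]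
  have h2 := (Module.End.hasEigenvalue_iff_isRoot_charpoly _ _).2 h1
  obtain ⟨v, hv⟩ := h2.exists_hasEigenvector
  have h3 := Module.End.aeval_apply_of_hasEigenvector
    (p := (minpoly K φ).map (algebraMap K (AlgebraicClosure K))) hv
  have h4 : aeval (φ.baseChange (AlgebraicClosure K)) (minpoly K φ) = 0 := by
    have := aeval_algHom_apply (Module.End.baseChangeHom K (AlgebraicClosure K) H) φ (minpoly K φ)
    rw [minpoly.aeval, map_zero] at this
    exact this
  rw [aeval_map_algebraMap, h4, eval_map_algebraMap] at h3
  exact (smul_eq_zero.1 h3.symm).resolve_right hv.2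

lemma aeval_restrict_coe {K : Type*} [Field K] {H : Type*} [AddCommGroup H] [Module K H]
    (ψ : H →ₗ[K] H) (W : Submodule K H) (hW : ∀ x ∈ W, ψ x ∈ W) (f : K[X]) (y : W) :
    ((aeval (ψ.restrict hW) f y : W) : H) = aeval ψ f (y : H) := by
  induction f using Polynomial.induction_on' generalizing y with
  | add f g hf hg => simp [hf, hg]
  | monomial n a =>
    simp only [aeval_monomial, Module.End.mul_apply, Module.algebraMap_end_apply,
      Submodule.coe_smul]
    congr 1
    induction n generalizing y with
    | zero => simp
    | succ n ih => simp only [pow_succ, Module.End.mul_apply, ih]; rfl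

lemma rootPart_pure {K : Type*} [Field K] {H : Type*} [AddCommGroup H] [Module K H]
    [FiniteDimensional K H] (ψ : H →ₗ[K] H) (S : Set (AlgebraicClosure K))
    (hW : ∀ x ∈ rootPart ψ S, ψ x ∈ rootPart ψ S)
    (α : AlgebraicClosure K) (h : aeval α (ψ.restrict hW).charpoly = 0) : α ∈ S := by
  have h1 := aeval_minpoly_of_charpoly _ α h
  have hαi : IsIntegral K α := (Algebra.IsAlgebraic.isAlgebraic α).isIntegral
  obtain ⟨g, hg⟩ := minpoly.dvd K α h1
  have hφi : IsIntegral K (ψ.restrict hW) := Algebra.IsIntegral.isIntegral _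
  have hne := minpoly.ne_zero hφi
  have hm := minpoly.irreducible hαi
  have hg0 : g ≠ 0 := by rintro rfl; exact hne (by rw [hg, mul_zero])
  have hgφ : aeval (ψ.restrict hW) g ≠ 0 := by
    intro hc
    have hd := minpoly.dvd K _ hc
    rw [hg] at hd
    have h5 : minpoly K α * g ∣ 1 * g := by rwa [one_mul]
    exact hm.not_isUnit (isUnit_of_dvd_one ((mul_dvd_mul_iff_right hg0).1 h5))
  obtain ⟨y, hy⟩ : ∃ y, aeval (ψ.restrict hW) g y ≠ 0 := by
    by_contra! hc
    exact hgφ (LinearMap.ext hc)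
  obtain ⟨f, hf, hx⟩ := (aeval (ψ.restrict hW) g y).2
  by_cases hd : minpoly K α ∣ f
  · apply hf
    obtain ⟨k, rfl⟩ := hd
    rw [map_mul, minpoly.aeval, zero_mul]
  · exfalso
    have hc : IsCoprime (minpoly K α) f := hm.coprime_iff_not_dvd.2 hd
    apply hy
    have hk : aeval ψ (minpoly K α) (aeval (ψ.restrict hW) g y : rootPart ψ S) = 0 := by
      rw [← aeval_restrict_coe ψ _ hW, ← Module.End.mul_apply, ← map_mul, ← hg, minpoly.aeval]
      rfl
    exact Subtype.ext (Submodule.disjoint_def.1 (disjoint_ker_aeval_of_isCoprime ψ hc) _ hk hx)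

lemma ker_le_iSup {K : Type*} [Field K] [CharZero K] {H : Type*} [AddCommGroup H] [Module K H]
    {q : ℕ} (hq : 1 < q) (ψ : H →ₗ[K] H) (f : K[X]) :
    (∀ α : AlgebraicClosure K, aeval α f = 0 → ∃ j : ℤ, IsWeilNumber q j α) →
    LinearMap.ker (aeval ψ f) ≤
      ⨆ i : ℤ, rootPart ψ {α : AlgebraicClosure K | IsWeilNumber q i α} := by
  induction f using UniqueFactorizationMonoid.induction_on_coprime with
  | h0 =>
    intro h
    obtain ⟨j, hj⟩ := h 0 (by simp)
    exact (not_isWeilNumber_zero hq hj).elim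
  | @h1 f hu =>
    intro _ x hx
    obtain ⟨g, hg⟩ := hu.exists_left_inv
    have : aeval ψ (g * f) x = 0 := by
      rw [map_mul, Module.End.mul_apply, LinearMap.mem_ker.1 hx, map_zero]
    rw [hg] at this
    have hx0 : x = 0 := by simpa using this
    rw [hx0]; exact zero_mem _
  | @hpr f n hf =>
    intro h x hx
    obtain ⟨α, hα⟩ := IsAlgClosed.exists_aeval_eq_zero (AlgebraicClosure K) f
      (degree_pos_of_irreducible hf.irreducible).ne'
    rcases Nat.eq_zero_or_pos n with rfl | hn
    · have hx0 : x = 0 := by simpa using hx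
      rw [hx0]; exact zero_mem _
    obtain ⟨j, hj⟩ := h α (by rw [map_pow, hα, zero_pow hn.ne'])
    refine Submodule.mem_iSup_of_mem j ⟨f ^ n, ?_, hx⟩
    intro β hβ
    rw [map_pow] at hβ
    exact hj.conj hf.irreducible hα (eq_zero_of_pow_eq_zero hβ)
  | @hcp f g hfg ihf ihg =>
    intro h
    rw [← sup_ker_aeval_eq_ker_aeval_mul_of_coprime ψ hfg.isCoprime]
    exact sup_le (ihf fun α hα => h α (by rw [map_mul, hα, zero_mul]))
      (ihg fun α hα => h α (by rw [map_mul, hα, mul_zero]))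

/-- if every eigenvalue of `ψ` is a Weil number of some integral weight, then
`H` decomposes as an internal direct sum of `ψ`-invariant subspaces `Hf i` (almost all zero)
such that `(Hf i, ψ|_{Hf i})` is pure of weight `i` for every `i`. -/
theorem statement1 (p n₀ : ℕ) (hp : p.Prime) (hn₀ : 0 < n₀)
    (K : Type*) [Field K] [CharZero K]
    (H : Type*) [AddCommGroup H] [Module K H] [FiniteDimensional K H]
    (ψ : H →ₗ[K] H)
    (hψ : ∀ α : AlgebraicClosure K, aeval α (LinearMap.charpoly ψ) = 0 →
      ∃ j : ℤ, IsWeilNumber (p ^ n₀) j α) :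
    ∃ (Hf : ℤ → Submodule K H) (hinv : ∀ i, ∀ x ∈ Hf i, ψ x ∈ Hf i),
      {i : ℤ | Hf i ≠ ⊥}.Finite ∧
      DirectSum.IsInternal Hf ∧
      ∀ i : ℤ, IsPureOfWeight (p ^ n₀) i (ψ.restrict (hinv i)) := by
  have hq : 1 < p ^ n₀ := Nat.one_lt_pow hn₀.ne' hp.one_lt
  have hind : iSupIndep fun i : ℤ =>
      rootPart ψ {α : AlgebraicClosure K | IsWeilNumber (p ^ n₀) i α} := by
    intro i
    refine Disjoint.mono_right (c := rootPart ψ (⋃ j : ℤ, ⋃ _ : j ≠ i,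
      {α : AlgebraicClosure K | IsWeilNumber (p ^ n₀) j α})) ?_ ?_
    · exact iSup₂_le fun j hj => rootPart_mono (Set.subset_iUnion₂_of_subset j hj subset_rfl)
    · apply rootPart_disjoint
      rw [Set.disjoint_left]
      intro α hα hc
      simp only [Set.mem_iUnion] at hc
      obtain ⟨j, hj, hc⟩ := hc
      exact hj (IsWeilNumber.unique hq hc hα)
  refine ⟨fun i => rootPart ψ {α : AlgebraicClosure K | IsWeilNumber (p ^ n₀) i α},
    fun i => rootPart_inv ψ _, WellFoundedGT.finite_ne_bot_of_iSupIndep hind,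
    DirectSum.isInternal_submodule_of_iSupIndep_of_iSup_eq_top hind ?_,
    fun i α hα => rootPart_pure ψ _ _ α hα⟩
  rw [eq_top_iff]
  refine le_trans ?_ (ker_le_iSup hq ψ ψ.charpoly hψ)
  rw [LinearMap.aeval_self_charpoly, LinearMap.ker_zero]


end
end

section
/- Suppose that every eigenvalue of ψ is a Weil number of weight j (relative to q) for some integer j. Then there exists a unique increasing family (W_i H)_{i ∈ ℤ} of ψ-invariant K-subspaces of H with W_i H = 0 for all sufficiently small i and W_i H = H for all sufficiently large i, such that for each i the quotient W_i H / W_{i-1} H, with the endomorphism induced by ψ, is pure of weight i. -/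
open Polynomial

noncomputable section

/-- The endomorphism induced by `ψ` on the quotient `B ⧸ A` of two nested `ψ`-invariant
submodules `A ≤ B`. -/
def quotRestrict {K H : Type*} [Field K] [AddCommGroup H] [Module K H]
    (ψ : H →ₗ[K] H) (A B : Submodule K H)
    (hA : ∀ x ∈ A, ψ x ∈ A) (hB : ∀ x ∈ B, ψ x ∈ B) (_hAB : A ≤ B) :
    (B ⧸ A.comap B.subtype) →ₗ[K] (B ⧸ A.comap B.subtype) :=
  Submodule.mapQ _ _ (ψ.restrict hB) (fun x hx => hA x.1 hx)

/-- A weight filtration on `(H, ψ)` relative to `q`: an increasing family of `ψ`-invariant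
subspaces, equal to `0` for all sufficiently small indices and to `H` for all sufficiently
large indices, whose `i`-th graded quotient is pure of weight `i` for every `i`. -/
structure IsWeightFiltration (q : ℕ) {K : Type*} [Field K] [CharZero K]
    {H : Type*} [AddCommGroup H] [Module K H] [FiniteDimensional K H]
    (ψ : H →ₗ[K] H) (W : ℤ → Submodule K H) : Prop where
  mono : Monotone W
  eventually_bot : ∃ m : ℤ, ∀ i ≤ m, W i = ⊥
  eventually_top : ∃ n : ℤ, ∀ i : ℤ, n ≤ i → W i = ⊤
  inv : ∀ i, ∀ x ∈ W i, ψ x ∈ W i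
  pure : ∀ i : ℤ, IsPureOfWeight q i
    (quotRestrict ψ (W (i - 1)) (W i) (inv (i - 1)) (inv i)
      (mono (by omega : (i : ℤ) - 1 ≤ i)))

theorem wf_aeval_intertwine {K M N : Type*} [Field K] [AddCommGroup M] [Module K M]
    [AddCommGroup N] [Module K N] (T : M →ₗ[K] N) (a : M →ₗ[K] M) (b : N →ₗ[K] N)
    (h : ∀ x, T (a x) = b (T x)) (f : K[X]) (x : M) :
    T ((aeval a f : Module.End K M) x) = (aeval b f : Module.End K N) (T x) := by
  have key : ∀ n : ℕ, ∀ x, T ((a ^ n) x) = (b ^ n) (T x) := by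
    intro n
    induction n with
    | zero => intro x; simp
    | succ n ih => intro x; rw [pow_succ, pow_succ, Module.End.mul_apply, Module.End.mul_apply, ih, h]
  induction f using Polynomial.induction_on' with
  | add p q hp hq => simp [hp, hq]
  | monomial n c => simp [aeval_monomial, Module.algebraMap_end_apply, key]

theorem wf_quot {K H : Type*} [Field K] [AddCommGroup H] [Module K H]
    (ψ : H →ₗ[K] H) (A B : Submodule K H)
    (hA : ∀ x ∈ A, ψ x ∈ A) (hB : ∀ x ∈ B, ψ x ∈ B) (hAB : A ≤ B) (f : K[X]) (x : B) :
    (aeval (quotRestrict ψ A B hA hB hAB) f : Module.End K _) (Submodule.Quotient.mk x) = 0 ↔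
      (aeval ψ f : Module.End K H) x ∈ A := by
  have h1 := wf_aeval_intertwine (Submodule.mkQ (A.comap B.subtype)) (ψ.restrict hB)
    (quotRestrict ψ A B hA hB hAB) (fun x => rfl) f x
  have h2 := wf_aeval_intertwine B.subtype (ψ.restrict hB) ψ (fun x => rfl) f x
  rw [Submodule.mkQ_apply, Submodule.mkQ_apply] at h1
  rw [← h1, Submodule.Quotient.mk_eq_zero, Submodule.mem_comap, h2]
  rfl

theorem wf_coprime_zero {K M : Type*} [Field K] [AddCommGroup M] [Module K M]
    (a : M →ₗ[K] M) (f g : K[X])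
    (h : ∀ α : AlgebraicClosure K, aeval α f = 0 → aeval α g = 0 → False) (x : M)
    (hf : (aeval a f : Module.End K M) x = 0) (hg : (aeval a g : Module.End K M) x = 0) :
    x = 0 := by
  have hc : IsCoprime f g :=
    (Polynomial.isCoprime_iff_aeval_ne_zero_of_isAlgClosed K (AlgebraicClosure K) f g).2
      (fun α => by by_contra hcon; push Not at hcon; exact h α hcon.1 hcon.2)
  obtain ⟨u, v, huv⟩ := hc
  have := congrArg (fun t => (aeval a t : Module.End K M) x) huv
  simpa [hf, hg] using this.symm

theorem wf_exists_vec {K M : Type*} [Field K] [AddCommGroup M] [Module K M]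
    [FiniteDimensional K M] (a : M →ₗ[K] M) (α : AlgebraicClosure K)
    (hα : aeval α (LinearMap.charpoly a) = 0) :
    ∃ x : M, x ≠ 0 ∧ (aeval a (minpoly K α) : Module.End K M) x = 0 := by
  by_contra hcon
  push Not at hcon
  have hinj : Function.Injective (aeval a (minpoly K α) : Module.End K M) := by
    rw [injective_iff_map_eq_zero]
    intro x hx
    by_contra h0
    exact hcon x h0 hx
  have hroot : (a.baseChange (AlgebraicClosure K)).charpoly.IsRoot α := by
    rw [LinearMap.charpoly_baseChange, IsRoot.def, eval_map_algebraMap]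
    exact hα
  have hev := (Module.End.hasEigenvalue_iff_isRoot_charpoly _ _).2 hroot
  obtain ⟨v, hv⟩ := hev.exists_hasEigenvector
  have hz := Module.End.aeval_apply_of_hasEigenvector
    (p := (minpoly K α).map (algebraMap K (AlgebraicClosure K))) hv
  rw [eval_map_algebraMap, minpoly.aeval, zero_smul, aeval_map_algebraMap] at hz
  have hb : aeval (a.baseChange (AlgebraicClosure K)) (minpoly K α)
      = LinearMap.baseChange (AlgebraicClosure K) (aeval a (minpoly K α) : Module.End K M) :=
    aeval_algHom_apply (Module.End.baseChangeHom K (AlgebraicClosure K) M) a (minpoly K α)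
  rw [hb] at hz
  have hi : Function.Injective
      (LinearMap.baseChange (AlgebraicClosure K) (aeval a (minpoly K α) : Module.End K M)) :=
    Module.Flat.lTensor_preserves_injective_linearMap (M := AlgebraicClosure K) _ hinj
  exact hv.2 (hi (by rw [hz, map_zero]))

theorem wf_weight_unique {F : Type*} [Field F] [CharZero F] (q : ℕ) (hq : 1 < q) (i j : ℤ)
    (α : F) (hi : IsWeilNumber q i α) (hj : IsWeilNumber q j α) : i = j := by
  have hd : (minpoly ℚ α).degree ≠ 0 := (minpoly.degree_pos hi.1.isIntegral).ne'
  obtain ⟨z, hz⟩ := IsAlgClosed.exists_aeval_eq_zero ℂ (minpoly ℚ α) hd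
  have h := (hi.2 z hz).symm.trans (hj.2 z hz)
  have hq' : (1 : ℝ) < q := by exact_mod_cast hq
  have h2 := (Real.rpow_right_inj (by linarith) hq'.ne').1 h
  have : (i : ℝ) = j := by linarith
  exact_mod_cast this

theorem wf_conj {K : Type*} [Field K] [CharZero K] (q : ℕ) (i : ℤ) (α β : AlgebraicClosure K)
    (hα : IsWeilNumber q i α) (h : aeval β (minpoly K α) = 0) : IsWeilNumber q i β := by
  have hdvd : minpoly K α ∣ (minpoly ℚ α).map (algebraMap ℚ K) :=
    minpoly.dvd_map_of_isScalarTower ℚ K α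
  have h0 : aeval β (minpoly ℚ α) = 0 := by
    rw [← aeval_map_algebraMap K]
    obtain ⟨c, hc⟩ := hdvd
    rw [hc, map_mul, h, zero_mul]
  have he : minpoly ℚ α = minpoly ℚ β :=
    minpoly.eq_of_irreducible_of_monic (minpoly.irreducible hα.1.isIntegral) h0
      (minpoly.monic hα.1.isIntegral)
  refine ⟨⟨minpoly ℚ α, minpoly.ne_zero hα.1.isIntegral, h0⟩, ?_⟩
  rw [← he]
  exact hα.2

/-- All roots of `f` are Weil numbers of weight at most `i`. -/
def WfGood {K : Type*} [Field K] [CharZero K] (q : ℕ) (i : ℤ) (f : K[X]) : Prop :=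
  ∀ α : AlgebraicClosure K, aeval α f = 0 → ∃ j : ℤ, j ≤ i ∧ IsWeilNumber q j α

theorem WfGood.mul {K : Type*} [Field K] [CharZero K] {q : ℕ} {i : ℤ} {f g : K[X]}
    (hf : WfGood q i f) (hg : WfGood q i g) : WfGood q i (f * g) := by
  intro α h
  rw [map_mul, mul_eq_zero] at h
  exact h.elim (hf α) (hg α)

theorem WfGood.mono {K : Type*} [Field K] [CharZero K] {q : ℕ} {i j : ℤ} {f : K[X]}
    (hf : WfGood q i f) (hij : i ≤ j) : WfGood q j f := by
  intro α h
  obtain ⟨k, hk, hw⟩ := hf α h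
  exact ⟨k, hk.trans hij, hw⟩

/-- The weight filtration. -/
def wfW {K H : Type*} [Field K] [CharZero K] [AddCommGroup H] [Module K H]
    (q : ℕ) (ψ : H →ₗ[K] H) (i : ℤ) : Submodule K H where
  carrier := {x | ∃ f : K[X], WfGood q i f ∧ (aeval ψ f : Module.End K H) x = 0}
  zero_mem' := ⟨1, fun α h => by simp at h, by simp⟩
  add_mem' := by
    rintro x y ⟨f, hf, hx⟩ ⟨g, hg, hy⟩
    refine ⟨f * g, hf.mul hg, ?_⟩
    rw [map_add]
    nth_rewrite 1 [mul_comm f g]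
    simp [hx, hy]
  smul_mem' := by
    rintro c x ⟨f, hf, hx⟩
    exact ⟨f, hf, by simp [hx]⟩

theorem wf_mem {K H : Type*} [Field K] [CharZero K] [AddCommGroup H] [Module K H]
    (q : ℕ) (ψ : H →ₗ[K] H) (i : ℤ) (x : H) : x ∈ wfW q ψ i ↔
      ∃ f : K[X], WfGood q i f ∧ (aeval ψ f : Module.End K H) x = 0 := Iff.rfl

theorem wf_of_aeval_mem {K H : Type*} [Field K] [CharZero K] [AddCommGroup H] [Module K H]
    (q : ℕ) (ψ : H →ₗ[K] H) (i : ℤ) (x : H) (g : K[X]) (hg : WfGood q i g)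
    (h : (aeval ψ g : Module.End K H) x ∈ wfW q ψ i) : x ∈ wfW q ψ i := by
  obtain ⟨f, hf, hx⟩ := h
  exact ⟨f * g, hf.mul hg, by simpa using hx⟩

theorem wf_isWF {K : Type*} [Field K] [CharZero K] {H : Type*} [AddCommGroup H] [Module K H]
    [FiniteDimensional K H] (q : ℕ) (hq : 1 < q) (ψ : H →ₗ[K] H)
    (hψ : ∀ α : AlgebraicClosure K, aeval α (LinearMap.charpoly ψ) = 0 →
      ∃ j : ℤ, IsWeilNumber q j α) : IsWeightFiltration q ψ (wfW q ψ) := by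
  have hfin : {α : AlgebraicClosure K | aeval α (LinearMap.charpoly ψ) = 0}.Finite := by
    refine ((LinearMap.charpoly ψ).rootSet_finite (AlgebraicClosure K)).subset ?_
    intro α h
    exact (mem_rootSet_of_ne ψ.charpoly_monic.ne_zero).2 h
  choose! w hw using hψ
  have hCH : ∀ x, (aeval ψ ψ.charpoly : Module.End K H) x = 0 := by
    intro x; rw [LinearMap.aeval_self_charpoly]; rfl
  refine ⟨?_, ?_, ?_, ?_, ?_⟩
  · rintro i j hij x ⟨f, hf, hx⟩
    exact ⟨f, hf.mono hij, hx⟩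
  · obtain ⟨m, hm⟩ := (hfin.image w).bddBelow
    refine ⟨m - 1, fun i hi => ?_⟩
    rw [eq_bot_iff]
    rintro x ⟨f, hf, hx⟩
    refine wf_coprime_zero ψ f ψ.charpoly ?_ x hx (hCH x)
    intro α h1 h2
    obtain ⟨j, hj, hjw⟩ := hf α h1
    have := wf_weight_unique q hq _ _ α hjw (hw α h2)
    have := hm ⟨α, h2, rfl⟩
    omega
  · obtain ⟨n, hn⟩ := (hfin.image w).bddAbove
    refine ⟨n, fun i hi => ?_⟩
    rw [eq_top_iff]
    intro x _
    exact ⟨ψ.charpoly, fun α h => ⟨w α, (hn ⟨α, h, rfl⟩).trans hi, hw α h⟩, hCH x⟩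
  · rintro i x ⟨f, hf, hx⟩
    exact ⟨f, hf, by rw [← wf_aeval_intertwine ψ ψ ψ (fun _ => rfl), hx, map_zero]⟩
  · intro i α hα
    obtain ⟨y, hy0, hy⟩ := wf_exists_vec _ α hα
    obtain ⟨x, rfl⟩ := Submodule.Quotient.mk_surjective _ y
    by_contra hcon
    rw [wf_quot] at hy
    apply hy0
    rw [Submodule.Quotient.mk_eq_zero, Submodule.mem_comap]
    change (x : H) ∈ wfW q ψ (i - 1)
    by_cases hlt : ∃ j : ℤ, j ≤ i - 1 ∧ IsWeilNumber q j α
    · obtain ⟨j, hj, hjw⟩ := hlt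
      exact wf_of_aeval_mem q ψ _ _ _ (fun β hβ => ⟨j, hj, wf_conj q j α β hjw hβ⟩) hy
    · obtain ⟨f, hf, hx⟩ := x.2
      obtain ⟨h, hh, hhx⟩ := hy
      have hα' : aeval α f ≠ 0 := by
        intro h0
        obtain ⟨j, hj, hjw⟩ := hf α h0
        rcases hj.lt_or_eq with h1 | h1
        · exact hlt ⟨j, by omega, hjw⟩
        · exact hcon (h1 ▸ hjw)
      have hy1 : (aeval ψ h : Module.End K H) x = 0 := by
        refine wf_coprime_zero ψ f (minpoly K α) ?_ _ ?_ ?_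
        · intro β h1 h2
          apply hα'
          have : minpoly K α = minpoly K β :=
            minpoly.eq_of_irreducible_of_monic
              (minpoly.irreducible (Algebra.IsIntegral.isIntegral α)) h2
              (minpoly.monic (Algebra.IsIntegral.isIntegral α))
          obtain ⟨c, hc⟩ := minpoly.dvd K β h1
          rw [hc, ← this, map_mul, minpoly.aeval, zero_mul]
        · rw [← Module.End.mul_apply, ← map_mul, mul_comm, map_mul, Module.End.mul_apply, hx,
            map_zero]
        · rw [← Module.End.mul_apply, ← map_mul, mul_comm, map_mul, Module.End.mul_apply, hhx]
      exact ⟨h, hh, hy1⟩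

theorem wf_unique {K : Type*} [Field K] [CharZero K] {H : Type*} [AddCommGroup H] [Module K H]
    [FiniteDimensional K H] (q : ℕ) (hq : 1 < q) (ψ : H →ₗ[K] H) (W : ℤ → Submodule K H)
    (hW : IsWeightFiltration q ψ W) : W = wfW q ψ := by
  obtain ⟨m, hm⟩ := hW.eventually_bot
  obtain ⟨n, hn⟩ := hW.eventually_top
  -- the characteristic polynomial of each graded piece
  have hc : ∀ i : ℤ, ∃ c : K[X], (∀ α : AlgebraicClosure K, aeval α c = 0 → IsWeilNumber q i α) ∧
      ∀ x ∈ W i, (aeval ψ c : Module.End K H) x ∈ W (i - 1) := by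
    intro i
    refine ⟨_, hW.pure i, fun x hx => ?_⟩
    rw [← wf_quot ψ (W (i - 1)) (W i) (hW.inv _) (hW.inv _) (hW.mono (by omega)) _ ⟨x, hx⟩,
      LinearMap.aeval_self_charpoly]
    rfl
  have hle : ∀ k : ℕ, W (m + k) ≤ wfW q ψ (m + k) := by
    intro k
    induction k with
    | zero => rw [hm _ (by simp)]; exact bot_le
    | succ k ih =>
      intro x hx
      obtain ⟨c, hc1, hc2⟩ := hc (m + (k + 1 : ℕ))
      refine wf_of_aeval_mem q ψ _ x c (fun α h => ⟨_, le_rfl, hc1 α h⟩) ?_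
      have h3 := hc2 x hx
      rw [show m + ((k + 1 : ℕ) : ℤ) - 1 = m + k by push_cast; ring] at h3
      obtain ⟨f, hf, hx⟩ := ih h3
      exact ⟨f, hf.mono (by push_cast; omega), hx⟩
  funext i
  apply le_antisymm
  · rcases le_total i m with h | h
    · rw [hm i h]; exact bot_le
    · have := hle (i - m).toNat
      rwa [show m + ((i - m).toNat : ℤ) = i by omega] at this
  · rintro x ⟨f, hf, hx⟩
    have hdown : ∀ k : ℕ, x ∈ W (i + k) → x ∈ W i := by
      intro k
      induction k with
      | zero => intro h; simpa using h
      | succ k ih =>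
        intro h
        apply ih
        set j : ℤ := i + (k + 1 : ℕ) with hj
        have hjk : i + (k : ℤ) = j - 1 := by rw [hj]; push_cast; ring
        rw [hjk]
        obtain ⟨c, hc1, hc2⟩ := hc j
        have hAB : W (j - 1) ≤ W j := hW.mono (by omega)
        have hz := wf_coprime_zero (quotRestrict ψ (W (j - 1)) (W j) (hW.inv _) (hW.inv _) hAB)
          f c ?_ (Submodule.Quotient.mk ⟨x, h⟩) ?_ ?_
        · rw [Submodule.Quotient.mk_eq_zero, Submodule.mem_comap] at hz
          exact hz
        · intro α h1 h2
          obtain ⟨l, hl, hlw⟩ := hf α h1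
          have := wf_weight_unique q hq _ _ α hlw (hc1 α h2)
          omega
        · rw [wf_quot]
          simp [hx]
        · rw [wf_quot]
          exact hc2 x h
    apply hdown (n - i).toNat
    rw [hn _ (by omega)]
    trivial

/-- if every eigenvalue of `ψ` is a Weil number of some integral weight, then
`(H, ψ)` admits a unique weight filtration. -/
theorem statement3 (p n₀ : ℕ) (hp : p.Prime) (hn₀ : 0 < n₀)
    (K : Type*) [Field K] [CharZero K]
    (H : Type*) [AddCommGroup H] [Module K H] [FiniteDimensional K H]
    (ψ : H →ₗ[K] H)
    (hψ : ∀ α : AlgebraicClosure K, aeval α (LinearMap.charpoly ψ) = 0 →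
      ∃ j : ℤ, IsWeilNumber (p ^ n₀) j α) :
    ∃! W : ℤ → Submodule K H, IsWeightFiltration (p ^ n₀) ψ W := by
  have hq : 1 < p ^ n₀ := Nat.one_lt_pow hn₀.ne' hp.one_lt
  exact ⟨wfW (p ^ n₀) ψ, wf_isWF _ hq ψ hψ, fun W hW => wf_unique _ hq ψ W hW⟩

end
end

section
/- Let (H, ψ) and (H', ψ') be as in the context and let f : H → H' be a K-linear map with f ∘ ψ = ψ' ∘ f. Let (H_i)_{i ∈ ℤ} and (H'_i)_{i ∈ ℤ} be families of ψ-invariant (respectively ψ'-invariant) subspaces, with all but finitely many members zero, realizing H and H' as internal direct sums such that (H_i, ψ|_{H_i}) and (H'_i, ψ'|_{H'_i}) are pure of weight i for every i. Then f(H_i) ⊆ H'_i for every i ∈ ℤ. -/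
open Polynomial

noncomputable section

theorem aeval_intertwine {K : Type*} [Field K] {H : Type*} [AddCommGroup H] [Module K H]
    {H' : Type*} [AddCommGroup H'] [Module K H']
    (f : H →ₗ[K] H') (ψ : H →ₗ[K] H) (ψ' : H' →ₗ[K] H') (hf : f ∘ₗ ψ = ψ' ∘ₗ f)
    (P : K[X]) (x : H) : f (aeval ψ P x) = aeval ψ' P (f x) := by
  have hpow : ∀ (n : ℕ) (x : H), f ((ψ ^ n) x) = (ψ' ^ n) (f x) := by
    intro n
    induction n with
    | zero => intro x; simp
    | succ n ih =>
      intro x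
      rw [pow_succ, pow_succ, Module.End.mul_apply, Module.End.mul_apply, ih]
      exact congrArg _ (LinearMap.congr_fun hf x)
  induction P using Polynomial.induction_on' with
  | add p q hp hq => simp [hp, hq]
  | monomial n a => simp [aeval_monomial, Module.algebraMap_end_apply, hpow]

theorem isCoprime_charpoly_of_ne (q : ℕ) (hq : 1 < q) (i j : ℤ) (hij : i ≠ j)
    {K : Type*} [Field K] [CharZero K] (P Q : K[X]) (hP0 : P ≠ 0)
    (hP : ∀ α : AlgebraicClosure K, aeval α P = 0 → IsWeilNumber q i α)
    (hQ : ∀ α : AlgebraicClosure K, aeval α Q = 0 → IsWeilNumber q j α) : IsCoprime P Q := by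
  rw [← Polynomial.isCoprime_map (algebraMap K (AlgebraicClosure K))]
  apply isCoprime_of_dvd
  · rintro ⟨h, -⟩
    exact hP0 ((Polynomial.map_eq_zero _).1 h)
  intro z hz hz0 h1 h2
  have hdeg : z.degree ≠ 0 := fun h => hz (Polynomial.isUnit_iff_degree_eq_zero.2 h)
  obtain ⟨α, hα⟩ := IsAlgClosed.exists_root z hdeg
  have hPα : aeval α P = 0 := by
    have := hα.dvd h1
    rwa [IsRoot.def, eval_map_algebraMap] at this
  have hQα : aeval α Q = 0 := by
    have := hα.dvd h2
    rwa [IsRoot.def, eval_map_algebraMap] at this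
  obtain ⟨halg, hi⟩ := hP α hPα
  obtain ⟨-, hj⟩ := hQ α hQα
  have hd : (minpoly ℚ α).degree ≠ 0 := (minpoly.degree_pos halg.isIntegral).ne'
  obtain ⟨w, hw⟩ := IsAlgClosed.exists_aeval_eq_zero ℂ (minpoly ℚ α) hd
  have he := (hi w hw).symm.trans (hj w hw)
  have hq1 : (1 : ℝ) < (q : ℝ) := by exact_mod_cast hq
  have := (Real.strictMono_rpow_of_base_gt_one hq1).injective he
  apply hij
  have h3 : (i : ℝ) = j := by linarith
  exact_mod_cast h3

theorem coe_aeval_restrict_apply {K : Type*} [Field K] {H : Type*} [AddCommGroup H] [Module K H]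
    (ψ : H →ₗ[K] H) (A : Submodule K H) (h : ∀ x ∈ A, ψ x ∈ A) (P : K[X]) (x : A) :
    ((aeval (ψ.restrict h) P x : A) : H) = aeval ψ P (x : H) := by
  have hc : A.subtype ∘ₗ (ψ.restrict h) = ψ ∘ₗ A.subtype := by ext; rfl
  exact aeval_intertwine _ _ _ hc P x

/-- a linear map intertwining `ψ` and `ψ'` respects the weight decompositions:
`f (H i) ⊆ H' i` for every `i`. -/
theorem statement4 (p n₀ : ℕ) (hp : p.Prime) (hn₀ : 0 < n₀)
    (K : Type*) [Field K] [CharZero K]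
    (H : Type*) [AddCommGroup H] [Module K H] [FiniteDimensional K H]
    (H' : Type*) [AddCommGroup H'] [Module K H'] [FiniteDimensional K H']
    (ψ : H →ₗ[K] H) (ψ' : H' →ₗ[K] H')
    (f : H →ₗ[K] H') (hf : f ∘ₗ ψ = ψ' ∘ₗ f)
    (A : ℤ → Submodule K H) (A' : ℤ → Submodule K H')
    (hinv : ∀ i, ∀ x ∈ A i, ψ x ∈ A i) (hinv' : ∀ i, ∀ x ∈ A' i, ψ' x ∈ A' i)
    (hfin : {i : ℤ | A i ≠ ⊥}.Finite) (hfin' : {i : ℤ | A' i ≠ ⊥}.Finite)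
    (hint : DirectSum.IsInternal A) (hint' : DirectSum.IsInternal A')
    (hpure : ∀ i : ℤ, IsPureOfWeight (p ^ n₀) i (ψ.restrict (hinv i)))
    (hpure' : ∀ i : ℤ, IsPureOfWeight (p ^ n₀) i (ψ'.restrict (hinv' i))) :
    ∀ i : ℤ, (A i).map f ≤ A' i := by
  classical
  intro i
  rintro _ ⟨x, hx, rfl⟩
  obtain ⟨v, hv⟩ := hint'.2 (f x)
  have hq : 1 < p ^ n₀ := Nat.one_lt_pow hn₀.ne' hp.one_lt
  set P := LinearMap.charpoly (ψ.restrict (hinv i)) with hPdef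
  have hPx : aeval ψ' P (f x) = 0 := by
    rw [← aeval_intertwine f ψ ψ' hf, ← coe_aeval_restrict_apply ψ (A i) (hinv i) P ⟨x, hx⟩,
      hPdef, LinearMap.aeval_self_charpoly]
    simp
  let c : (DirectSum ℤ fun j => A' j) →ₗ[K] H' := DirectSum.coeLinearMap A'
  let g : (DirectSum ℤ fun j => A' j) →ₗ[K] (DirectSum ℤ fun j => A' j) :=
    DirectSum.lmap (fun j => aeval (ψ'.restrict (hinv' j)) P)
  have hcg : c ∘ₗ g = (aeval ψ' P) ∘ₗ c := by
    apply DirectSum.linearMap_ext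
    intro j
    ext y
    simp [c, g, DirectSum.lmap_lof, DirectSum.coeLinearMap_lof, coe_aeval_restrict_apply]
  have hcv : c v = f x := hv
  have hgv : g v = 0 := by
    apply hint'.1
    have h1 : c (g v) = aeval ψ' P (c v) := LinearMap.congr_fun hcg v
    rw [hcv, hPx] at h1
    rw [map_zero]
    exact h1
  have hz : ∀ j, j ≠ i → v j = 0 := by
    intro j hj
    have h1 : aeval (ψ'.restrict (hinv' j)) P (v j) = 0 := by
      have : (g v) j = 0 := by rw [hgv]; rfl
      rwa [DirectSum.lmap_apply] at this
    obtain ⟨a, b, hab⟩ := isCoprime_charpoly_of_ne (p ^ n₀) hq i j hj.symm P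
      (LinearMap.charpoly (ψ'.restrict (hinv' j))) (LinearMap.charpoly_monic _).ne_zero
      (hpure i) (hpure' j)
    have h2 := congrArg (fun R => aeval (ψ'.restrict (hinv' j)) R (v j)) hab
    simpa [LinearMap.aeval_self_charpoly, h1] using h2.symm
  have hvi : v = DirectSum.of (fun j => A' j) i (v i) := by
    ext j
    by_cases h : j = i
    · subst h; simp
    · rw [hz j h, DirectSum.of_eq_of_ne _ _ _ h]
  rw [← hv, hvi, DirectSum.coeAddMonoidHom_of]
  exact (v i).2

end
end

section
/- Let (H, ψ) and (H', ψ') be as in the context and let f : H → H' be a K-linear map with f ∘ ψ = ψ' ∘ f. Let (W_i H)_{i ∈ ℤ} and (W_i H')_{i ∈ ℤ} be increasing, exhaustive, eventually-zero-below families of ψ-invariant (respectively ψ'-invariant) subspaces such that each graded quotient W_i H / W_{i-1} H (respectively W_i H' / W_{i-1} H') with the induced endomorphism is pure of weight i. Then f respects the filtrations and is strict: for every i ∈ ℤ one has f(W_i H) = f(H) ∩ W_i H'. -/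
open Polynomial

noncomputable section

theorem weil_unique {F : Type*} [Field F] [CharZero F] {q : ℕ} (hq : 1 < q) {i j : ℤ} {α : F}
    (h : IsWeilNumber q i α) (h' : IsWeilNumber q j α) : i = j := by
  have hint : IsIntegral ℚ α := h.1.isIntegral
  obtain ⟨z, hz⟩ := IsAlgClosed.exists_aeval_eq_zero ℂ (minpoly ℚ α)
    (minpoly.degree_pos hint).ne'
  have e : (q : ℝ) ^ ((i : ℝ) / 2) = (q : ℝ) ^ ((j : ℝ) / 2) := (h.2 z hz).symm.trans (h'.2 z hz)
  have hq' : (1 : ℝ) < q := by exact_mod_cast hq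
  have h1 : (i : ℝ) / 2 = (j : ℝ) / 2 :=
    (Real.strictMono_rpow_of_base_gt_one hq').injective e
  have h2 : (i : ℝ) = j := by linarith
  exact_mod_cast h2

theorem aeval_mem_inv {K H : Type*} [Field K] [AddCommGroup H] [Module K H]
    (ψ : H →ₗ[K] H) (B : Submodule K H) (hB : ∀ x ∈ B, ψ x ∈ B) (P : K[X]) :
    ∀ x ∈ B, aeval ψ P x ∈ B := by
  induction P using Polynomial.induction_on' with
  | add p q hp hq =>
    intro x hx
    rw [map_add, LinearMap.add_apply]
    exact B.add_mem (hp x hx) (hq x hx)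
  | monomial n a =>
    intro x hx
    rw [aeval_monomial, Module.End.mul_apply, Module.algebraMap_end_apply]
    refine B.smul_mem _ ?_
    induction n with
    | zero => simpa using hx
    | succ n ih => rw [pow_succ', Module.End.mul_apply]; exact hB _ ih

theorem aeval_comm {K H H' : Type*} [Field K] [AddCommGroup H] [Module K H]
    [AddCommGroup H'] [Module K H']
    (ψ : H →ₗ[K] H) (ψ' : H' →ₗ[K] H') (f : H →ₗ[K] H') (hf : ∀ x, f (ψ x) = ψ' (f x))
    (P : K[X]) : ∀ x, f (aeval ψ P x) = aeval ψ' P (f x) := by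
  induction P using Polynomial.induction_on' with
  | add p q hp hq => intro x; simp [hp, hq]
  | monomial n a =>
    intro x
    simp only [aeval_monomial, Module.End.mul_apply, Module.algebraMap_end_apply, map_smul]
    congr 1
    induction n with
    | zero => simp
    | succ n ih => rw [pow_succ', Module.End.mul_apply, hf, ih, pow_succ', Module.End.mul_apply]

theorem aeval_quot {K H : Type*} [Field K] [AddCommGroup H] [Module K H] [FiniteDimensional K H]
    (ψ : H →ₗ[K] H) (A B : Submodule K H)
    (hA : ∀ x ∈ A, ψ x ∈ A) (hB : ∀ x ∈ B, ψ x ∈ B) (hAB : A ≤ B) :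
    ∀ x ∈ B, aeval ψ (quotRestrict ψ A B hA hB hAB).charpoly x ∈ A := by
  intro x hx
  set P := (quotRestrict ψ A B hA hB hAB).charpoly with hP
  have h1 := aeval_comm (ψ.restrict hB) ψ B.subtype (fun _ => rfl) P ⟨x, hx⟩
  have h2 := aeval_comm (ψ.restrict hB) (quotRestrict ψ A B hA hB hAB)
    (A.comap B.subtype).mkQ (fun _ => rfl) P ⟨x, hx⟩
  rw [hP, LinearMap.aeval_self_charpoly, LinearMap.zero_apply, Submodule.mkQ_apply,
    Submodule.Quotient.mk_eq_zero, Submodule.mem_comap, ← hP, h1] at h2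
  exact h2

theorem exists_poly (q : ℕ) {K : Type*} [Field K] [CharZero K]
    {H : Type*} [AddCommGroup H] [Module K H] [FiniteDimensional K H]
    (ψ : H →ₗ[K] H) (W : ℤ → Submodule K H) (hW : IsWeightFiltration q ψ W) (a k : ℤ)
    (hak : a ≤ k) : ∃ P : K[X], (∀ x ∈ W k, aeval ψ P x ∈ W a) ∧
      ∀ α : AlgebraicClosure K, aeval α P = 0 → ∃ j, a < j ∧ j ≤ k ∧ IsWeilNumber q j α := by
  induction k, hak using Int.le_induction with
  | base => exact ⟨1, by simp, by simp⟩
  | succ k hk ih =>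
    obtain ⟨P, hP, hr⟩ := ih
    refine ⟨P * (quotRestrict ψ (W (k + 1 - 1)) (W (k + 1)) (hW.inv (k + 1 - 1)) (hW.inv (k + 1))
      (hW.mono (by omega))).charpoly, fun x hx => ?_, fun α hα => ?_⟩
    · rw [map_mul, Module.End.mul_apply]
      refine hP _ ?_
      have := aeval_quot ψ _ _ (hW.inv (k + 1 - 1)) (hW.inv (k + 1)) (hW.mono (by omega)) x hx
      rw [show W k = W (k + 1 - 1) by simp]
      exact this
    · rw [map_mul, mul_eq_zero] at hα
      rcases hα with h | h
      · obtain ⟨j, h1, h2, h3⟩ := hr α h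
        exact ⟨j, h1, by omega, h3⟩
      · exact ⟨k + 1, by omega, le_rfl, hW.pure (k + 1) α h⟩

theorem exists_AB (q : ℕ) {K : Type*} [Field K] [CharZero K]
    {H : Type*} [AddCommGroup H] [Module K H] [FiniteDimensional K H]
    (ψ : H →ₗ[K] H) (W : ℤ → Submodule K H) (hW : IsWeightFiltration q ψ W) (i : ℤ) :
    ∃ A B : K[X], (∀ x ∈ W i, aeval ψ A x = 0) ∧ (∀ x, aeval ψ B x ∈ W i) ∧
      (∀ α : AlgebraicClosure K, aeval α A = 0 → ∃ j, j ≤ i ∧ IsWeilNumber q j α) ∧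
      (∀ α : AlgebraicClosure K, aeval α B = 0 → ∃ j, i < j ∧ IsWeilNumber q j α) := by
  obtain ⟨m, hm⟩ := hW.eventually_bot
  obtain ⟨n, hn⟩ := hW.eventually_top
  obtain ⟨A, hA, hA'⟩ := exists_poly q ψ W hW (min m i) i (min_le_right _ _)
  obtain ⟨B, hB, hB'⟩ := exists_poly q ψ W hW i (max n i) (le_max_right _ _)
  rw [hm _ (min_le_left _ _)] at hA
  rw [hn _ (le_max_left _ _)] at hB
  refine ⟨A, B, fun x hx => by simpa using hA x hx, fun x => hB x trivial, fun α h => ?_,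
    fun α h => ?_⟩
  · obtain ⟨j, -, h2, h3⟩ := hA' α h
    exact ⟨j, h2, h3⟩
  · obtain ⟨j, h2, -, h3⟩ := hB' α h
    exact ⟨j, h2, h3⟩

/-- a linear map intertwining `ψ` and `ψ'` respects weight filtrations and is
strict: `f (W i) = f (H) ⊓ W' i` for every `i`. -/
theorem statement5 (p n₀ : ℕ) (hp : p.Prime) (hn₀ : 0 < n₀)
    (K : Type*) [Field K] [CharZero K]
    (H : Type*) [AddCommGroup H] [Module K H] [FiniteDimensional K H]
    (H' : Type*) [AddCommGroup H'] [Module K H'] [FiniteDimensional K H']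
    (ψ : H →ₗ[K] H) (ψ' : H' →ₗ[K] H')
    (f : H →ₗ[K] H') (hf : f ∘ₗ ψ = ψ' ∘ₗ f)
    (W : ℤ → Submodule K H) (W' : ℤ → Submodule K H')
    (hW : IsWeightFiltration (p ^ n₀) ψ W)
    (hW' : IsWeightFiltration (p ^ n₀) ψ' W') :
    ∀ i : ℤ, (W i).map f = LinearMap.range f ⊓ W' i := by
  intro i
  have hq : 1 < p ^ n₀ := Nat.one_lt_pow hn₀.ne' hp.one_lt
  have hf' : ∀ x, f (ψ x) = ψ' (f x) := fun x => LinearMap.congr_fun hf x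
  obtain ⟨A, B, hA, hB, rA, rB⟩ := exists_AB _ ψ W hW i
  obtain ⟨A', B', hA', hB', rA', rB'⟩ := exists_AB _ ψ' W' hW' i
  have hco : IsCoprime (A * A') (B * B') := by
    rw [Polynomial.isCoprime_iff_aeval_ne_zero_of_isAlgClosed K (AlgebraicClosure K)]
    intro α
    by_contra! hcon
    obtain ⟨h1, h2⟩ := hcon
    rw [map_mul, mul_eq_zero] at h1 h2
    obtain ⟨j, hj, wj⟩ := h1.elim (rA α) (rA' α)
    obtain ⟨k, hk, wk⟩ := h2.elim (rB α) (rB' α)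
    have := weil_unique hq wj wk
    omega
  obtain ⟨u, v, huv⟩ := hco
  have hBW : ∀ x, aeval ψ (B * B') x ∈ W i := fun x => by
    rw [map_mul, Module.End.mul_apply]; exact hB _
  have hBW' : ∀ x, aeval ψ' (B * B') x ∈ W' i := fun x => by
    rw [mul_comm, map_mul, Module.End.mul_apply]; exact hB' _
  have hd : ∀ x ∈ W i, aeval ψ (B * B') (aeval ψ v x) = x := fun x hx => by
    have h := LinearMap.congr_fun (congrArg (aeval ψ) huv) x
    rw [show u * (A * A') + v * (B * B') = (u * A') * A + (B * B') * v by ring, map_add, map_one,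
      LinearMap.add_apply, map_mul _ (u * A'), map_mul _ (B * B'), Module.End.mul_apply,
      Module.End.mul_apply, hA x hx, map_zero, zero_add] at h
    exact h
  have hd' : ∀ x ∈ W' i, aeval ψ' (B * B') (aeval ψ' v x) = x := fun x hx => by
    have h := LinearMap.congr_fun (congrArg (aeval ψ') huv) x
    rw [show u * (A * A') + v * (B * B') = (u * A) * A' + (B * B') * v by ring, map_add, map_one,
      LinearMap.add_apply, map_mul _ (u * A), map_mul _ (B * B'), Module.End.mul_apply,
      Module.End.mul_apply, hA' x hx, map_zero, zero_add] at h
    exact h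
  have hc := aeval_comm ψ ψ' f hf'
  apply le_antisymm
  · rintro _ ⟨x, hx, rfl⟩
    refine ⟨⟨x, rfl⟩, ?_⟩
    rw [← hd x hx, hc]
    exact hBW' _
  · rintro _ ⟨⟨x, rfl⟩, hx⟩
    refine ⟨aeval ψ (B * B') (aeval ψ v x), hBW _, ?_⟩
    rw [hc, hc]
    exact hd' _ hx

end
end

section
/- Let K be a number field with ring of integers 𝓞_K and let c ∈ 𝓞_K. Suppose that for all but finitely many nonzero prime ideals 𝔭 of 𝓞_K one has c^p − c ∈ 𝔭, where p denotes the characteristic of the residue field 𝓞_K/𝔭. Then c is a rational integer, i.e., c lies in the image of ℤ in 𝓞_K. -/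
open NumberField

section
variable {L : Type*} [Field L] [NumberField L]

noncomputable def idl (F : ℕ → Ideal (𝓞 L)) (a : ℕ) : Ideal (𝓞 L) :=
  (Multiset.map F (a.primeFactorsList : Multiset ℕ)).prod

lemma idl_norm (M : ℕ) (F : ℕ → Ideal (𝓞 L))
    (hF : ∀ p : ℕ, p.Prime → ¬ p ∣ M → Ideal.absNorm (F p) = p)
    (a : ℕ) (ha : a.Coprime M) (ha0 : a ≠ 0) : Ideal.absNorm (idl F a) = a := by
  unfold idl
  rw [map_multiset_prod, Multiset.map_map]
  have : Multiset.map (Ideal.absNorm ∘ F) (a.primeFactorsList : Multiset ℕ)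
      = (a.primeFactorsList : Multiset ℕ) := by
    conv_rhs => rw [← Multiset.map_id (a.primeFactorsList : Multiset ℕ)]
    refine Multiset.map_congr rfl fun p hp => ?_
    have hp' := Nat.prime_of_mem_primeFactorsList (by simpa using hp)
    have hd := Nat.dvd_of_mem_primeFactorsList (by simpa using hp)
    exact hF p hp' fun h => Nat.Prime.not_coprime_iff_dvd.mpr ⟨p, hp', hd, h⟩ ha
  rw [this, Multiset.prod_coe, Nat.prod_primeFactorsList ha0]

lemma idl_count [DecidableEq (Ideal (𝓞 L))] (M : ℕ) (F G : ℕ → Ideal (𝓞 L))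
    (hF : ∀ p : ℕ, p.Prime → ¬ p ∣ M → Prime (F p) ∧ Ideal.absNorm (F p) = p)
    (hG : ∀ p : ℕ, p.Prime → ¬ p ∣ M → Prime (G p) ∧ Ideal.absNorm (G p) = p)
    (hFG : ∀ p : ℕ, p.Prime → ¬ p ∣ M → F p ≠ G p)
    (a b : ℕ) (ha : a.Coprime M) (hb : b.Coprime M) (p : ℕ) (hp : p.Prime) (hpM : ¬ p ∣ M) :
    (UniqueFactorizationMonoid.normalizedFactors (idl F a * idl G b)).count (F p)
      = a.factorization p := by
  have key : ∀ c : ℕ, c.Coprime M → ∀ q ∈ c.primeFactorsList, q.Prime ∧ ¬ q ∣ M := by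
    intro c hc q hq
    have hp' := Nat.prime_of_mem_primeFactorsList hq
    have hd := Nat.dvd_of_mem_primeFactorsList hq
    exact ⟨hp', fun h => Nat.Prime.not_coprime_iff_dvd.mpr ⟨q, hp', hd, h⟩ hc⟩
  unfold idl
  rw [← Multiset.prod_add, UniqueFactorizationMonoid.normalizedFactors_prod_of_prime,
    Multiset.count_add]
  · have h2 : Multiset.count (F p) (Multiset.map G (b.primeFactorsList : Multiset ℕ)) = 0 := by
      rw [Multiset.count_eq_zero, Multiset.mem_map]
      rintro ⟨q, hq, hqp⟩
      obtain ⟨h1, h2⟩ := key b hb q (by simpa using hq)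
      have : q = p := by rw [← (hG q h1 h2).2, hqp, (hF p hp hpM).2]
      subst this
      exact hFG q h1 h2 hqp.symm
    rw [h2, add_zero, ← Nat.primeFactorsList_count_eq, ← Multiset.coe_count]
    by_cases hpa : p ∈ (a.primeFactorsList : Multiset ℕ)
    · refine Multiset.count_map_eq_count _ _ ?_ _ hpa
      intro x hx y hy hxy
      obtain ⟨h1, h2⟩ := key a ha x (by simpa using hx)
      obtain ⟨h3, h4⟩ := key a ha y (by simpa using hy)
      rw [← (hF x h1 h2).2, hxy, (hF y h3 h4).2]
    · rw [Multiset.count_eq_zero_of_notMem hpa, Multiset.count_eq_zero, Multiset.mem_map]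
      rintro ⟨q, hq, hqp⟩
      obtain ⟨h1, h2⟩ := key a ha q (by simpa using hq)
      have : q = p := by rw [← (hF q h1 h2).2, hqp, (hF p hp hpM).2]
      exact hpa (this ▸ hq)
  · intro P hP
    rw [Multiset.mem_add, Multiset.mem_map, Multiset.mem_map] at hP
    rcases hP with ⟨q, hq, rfl⟩ | ⟨q, hq, rfl⟩
    · obtain ⟨h1, h2⟩ := key a ha q (by simpa using hq)
      exact (hF q h1 h2).1
    · obtain ⟨h1, h2⟩ := key b hb q (by simpa using hq)
      exact (hG q h1 h2).1

lemma idl_inj (M : ℕ) (F G : ℕ → Ideal (𝓞 L))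
    (hF : ∀ p : ℕ, p.Prime → ¬ p ∣ M → Prime (F p) ∧ Ideal.absNorm (F p) = p)
    (hG : ∀ p : ℕ, p.Prime → ¬ p ∣ M → Prime (G p) ∧ Ideal.absNorm (G p) = p)
    (hFG : ∀ p : ℕ, p.Prime → ¬ p ∣ M → F p ≠ G p)
    (a b a' b' : ℕ) (ha : a.Coprime M) (hb : b.Coprime M)
    (ha' : a'.Coprime M) (hb' : b'.Coprime M) (h0 : a ≠ 0) (h0' : a' ≠ 0)
    (h : idl F a * idl G b = idl F a' * idl G b') : a = a' := by
  classical
  refine Nat.eq_of_factorization_eq h0 h0' fun p => ?_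
  by_cases hp : p.Prime
  · by_cases hpM : p ∣ M
    · have key : ∀ c : ℕ, c.Coprime M → c.factorization p = 0 := fun c hc =>
        Nat.factorization_eq_zero_of_not_dvd fun h =>
          Nat.Prime.not_coprime_iff_dvd.mpr ⟨p, hp, h, hpM⟩ hc
      rw [key a ha, key a' ha']
    · rw [← idl_count M F G hF hG hFG a b ha hb p hp hpM, h,
        idl_count M F G hF hG hFG a' b' ha' hb' p hp hpM]
  · simp [hp]

lemma counting (M : ℕ) (hM : M ≠ 0) (F G : ℕ → Ideal (𝓞 L))
    (hF : ∀ p : ℕ, p.Prime → ¬ p ∣ M → Prime (F p) ∧ Ideal.absNorm (F p) = p)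
    (hG : ∀ p : ℕ, p.Prime → ¬ p ∣ M → Prime (G p) ∧ Ideal.absNorm (G p) = p)
    (hFG : ∀ p : ℕ, p.Prime → ¬ p ∣ M → F p ≠ G p) : False := by
  have hcop : ∀ k : ℕ, (1 + k * M).Coprime M := fun k => by simp
  have hM1 : (1 : ℝ) ≤ M := by exact_mod_cast Nat.one_le_iff_ne_zero.mpr hM
  have hcard : ∀ N X : ℕ, ∑ k ∈ Finset.range N, X / (M * (1 + k * M)) ≤
      Nat.card {I : Ideal (𝓞 L) // (Ideal.absNorm I : ℝ) ≤ (X : ℝ)} := by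
    intro N X
    have : Finite {I : Ideal (𝓞 L) // (Ideal.absNorm I : ℝ) ≤ (X : ℝ)} := by
      have h := (Ideal.finite_setOfPred_absNorm_le (S := 𝓞 L) X).to_subtype
      simp only [Nat.cast_le]
      exact h
    let s : Finset (Σ _ : ℕ, ℕ) :=
      (Finset.range N).sigma fun k => Finset.range (X / (M * (1 + k * M)))
    have hs : s.card = ∑ k ∈ Finset.range N, X / (M * (1 + k * M)) := by
      simp [s, Finset.card_sigma]
    rw [← hs, ← Fintype.card_coe s, ← Nat.card_eq_fintype_card]
    have hn : ∀ k j : ℕ, Ideal.absNorm (idl F (1 + k * M) * idl G (1 + j * M))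
        = (1 + k * M) * (1 + j * M) := fun k j => by
      rw [map_mul, idl_norm M F (fun p h h' => (hF p h h').2) _ (hcop k) (by omega),
        idl_norm M G (fun p h h' => (hG p h h').2) _ (hcop j) (by omega)]
    refine Nat.card_le_card_of_injective
      (fun x : s => ⟨idl F (1 + x.1.1 * M) * idl G (1 + x.1.2 * M), ?_⟩) ?_
    · obtain ⟨⟨k, j⟩, hx⟩ := x
      simp only [s, Finset.mem_sigma, Finset.mem_range] at hx
      rw [hn]
      have h1 : (j + 1) * (M * (1 + k * M)) ≤ X :=
        (Nat.mul_le_mul_right _ hx.2).trans (Nat.div_mul_le_self _ _)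
      have h2 : (1 + k * M) * (1 + j * M) ≤ (j + 1) * (M * (1 + k * M)) := by
        have : 1 + j * M ≤ (j + 1) * M := by
          have := Nat.one_le_iff_ne_zero.mpr hM
          nlinarith
        calc _ ≤ (1 + k * M) * ((j + 1) * M) := Nat.mul_le_mul_left _ this
          _ = _ := by ring
      exact_mod_cast h2.trans h1
    · rintro ⟨⟨k, j⟩, hx⟩ ⟨⟨k', j'⟩, hx'⟩ h
      simp only [Subtype.mk.injEq] at h
      have h1 := idl_inj M F G hF hG hFG _ _ _ _ (hcop k) (hcop j) (hcop k') (hcop j')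
        (by omega) (by omega) h
      have h2 := (hn k j).symm.trans ((congrArg Ideal.absNorm h).trans (hn k' j'))
      rw [h1] at h2
      have h3 := Nat.eq_of_mul_eq_mul_left (by omega) h2
      have hk : k = k' := Nat.eq_of_mul_eq_mul_right (Nat.pos_of_ne_zero hM) (by omega)
      have hj : j = j' := Nat.eq_of_mul_eq_mul_right (Nat.pos_of_ne_zero hM) (by omega)
      subst hk hj
      rfl
  obtain ⟨C, hC⟩ : ∃ C : ℝ, ∀ᶠ s : ℝ in Filter.atTop,
      (Nat.card {I : Ideal (𝓞 L) // (Ideal.absNorm I : ℝ) ≤ s} : ℝ) / s ≤ C :=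
    ⟨_, (Ideal.tendsto_norm_le_div_atTop L).eventually_le_const (lt_add_one _)⟩
  obtain ⟨N, hN⟩ := (Real.tendsto_sum_range_one_div_nat_succ_atTop.eventually_ge_atTop
    ((C + 1) * M ^ 2)).exists
  obtain ⟨X, hX⟩ := ((tendsto_natCast_atTop_atTop.eventually hC).and
    (Filter.eventually_gt_atTop N)).exists
  obtain ⟨hX, hNX⟩ := hX
  have hX0 : (0 : ℝ) < X := by exact_mod_cast (Nat.zero_le N).trans_lt hNX
  rw [div_le_iff₀ hX0] at hX
  have h1 : (∑ k ∈ Finset.range N, ((X / (M * (1 + k * M)) : ℕ) : ℝ)) ≤ C * X := by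
    refine le_trans ?_ hX
    exact_mod_cast hcard N X
  have h2 : ∑ k ∈ Finset.range N, ((X : ℝ) / M ^ 2 * (1 / (k + 1)) - 1) ≤
      ∑ k ∈ Finset.range N, ((X / (M * (1 + k * M)) : ℕ) : ℝ) := by
    refine Finset.sum_le_sum fun k _ => ?_
    rw [← Nat.floor_div_eq_div (K := ℝ)]
    refine le_trans ?_ (Nat.sub_one_lt_floor _).le
    gcongr
    rw [div_mul_div_comm, mul_one]
    push_cast
    refine div_le_div_of_nonneg_left hX0.le (by positivity) ?_
    have hk : (0:ℝ) ≤ k := by positivity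
    rw [pow_two, mul_assoc]
    refine mul_le_mul_of_nonneg_left ?_ (by positivity)
    nlinarith
  rw [Finset.sum_sub_distrib, ← Finset.mul_sum] at h2
  simp only [Finset.sum_const, Finset.card_range, nsmul_eq_mul, mul_one] at h2
  have h3 : (X : ℝ) * (C + 1) ≤ (X : ℝ) / M ^ 2 * ∑ i ∈ Finset.range N, (1 / ((i:ℝ) + 1)) := by
    calc (X : ℝ) * (C + 1) = (X : ℝ) / M ^ 2 * ((C + 1) * M ^ 2) := by field_simp
      _ ≤ _ := by gcongr
  have : (N : ℝ) < X := by exact_mod_cast hNX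
  nlinarith
end

section
variable {L : Type*} [Field L] [NumberField L]

lemma norm_aux (θ D : 𝓞 L) (hDc : D ∈ conductor ℤ θ) (p : ℕ) (hp : p.Prime)
    (Q : Ideal (𝓞 L)) (hQ : Q.IsPrime) (hpQ : (p : 𝓞 L) ∈ Q) (hDQ : D ∉ Q)
    (hθQ : θ ^ p - θ ∈ Q) : Ideal.absNorm Q = p := by
  have hspan : Ideal.absNorm (Ideal.span {(p : 𝓞 L)}) = p ^ Module.finrank ℚ L := by
    rw [Ideal.absNorm_span_natCast, RingOfIntegers.rank]
  have hp0 : (p : 𝓞 L) ≠ 0 := by exact_mod_cast hp.ne_zero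
  have hQ0 : Q ≠ ⊥ := fun h => hp0 (by simpa [h] using hpQ)
  have hmax : Q.IsMaximal := hQ.isMaximal hQ0
  let _ : Field (𝓞 L ⧸ Q) := Ideal.Quotient.field Q
  have hfin : Finite (𝓞 L ⧸ Q) := Ideal.finiteQuotientOfFreeOfNeBot Q hQ0
  have : Fact p.Prime := ⟨hp⟩
  have hchar : CharP (𝓞 L ⧸ Q) p := by
    refine (CharP.charP_iff_prime_eq_zero hp).mpr ?_
    rw [← map_natCast (Ideal.Quotient.mk Q)]
    exact Ideal.Quotient.eq_zero_iff_mem.mpr hpQ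
  have hadj : ∀ y ∈ Algebra.adjoin ℤ {θ},
      (Ideal.Quotient.mk Q y) ^ p = Ideal.Quotient.mk Q y := by
    intro y hy
    induction hy using Algebra.adjoin_induction with
    | mem x hx =>
      rw [Set.mem_singleton_iff.mp hx, ← sub_eq_zero, ← map_pow, ← map_sub]
      exact Ideal.Quotient.eq_zero_iff_mem.mpr hθQ
    | algebraMap r =>
      rw [← frobenius_def]
      simp
    | add x y _ _ hx hy => rw [map_add, add_pow_char, hx, hy]
    | mul x y _ _ hx hy => rw [map_mul, mul_pow, hx, hy]
  have hall : ∀ x : 𝓞 L ⧸ Q, x ^ p = x := by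
    intro x
    obtain ⟨y, rfl⟩ := Ideal.Quotient.mk_surjective x
    have h1 := hadj _ (mem_conductor_iff.mp hDc y)
    have h2 := hadj _ (conductor_subset_adjoin hDc)
    rw [map_mul, mul_pow, h2] at h1
    refine mul_left_cancel₀ ?_ h1
    exact fun h => hDQ (Ideal.Quotient.eq_zero_iff_mem.mp h)
  have hle : Nat.card (𝓞 L ⧸ Q) ≤ p := by
    classical
    have := Fintype.ofFinite (𝓞 L ⧸ Q)
    rw [Nat.card_eq_fintype_card, ← Finset.card_univ]
    have hne := FiniteField.X_pow_card_sub_X_ne_zero (𝓞 L ⧸ Q) hp.one_lt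
    have hdeg := FiniteField.X_pow_card_sub_X_natDegree_eq (𝓞 L ⧸ Q) hp.one_lt
    rw [← hdeg]
    refine Polynomial.card_le_degree_of_subset_roots fun x _ => ?_
    rw [Polynomial.mem_roots hne]
    simp [hall x]
  have hle' : Ideal.absNorm Q ≤ p := hle
  have hdvd : Ideal.absNorm Q ∣ p ^ Module.finrank ℚ L := by
    rw [← hspan]
    exact Ideal.absNorm_dvd_absNorm_of_le ((Ideal.span_singleton_le_iff_mem _).mpr hpQ)
  obtain ⟨k, -, hk⟩ := (Nat.dvd_prime_pow hp).mp hdvd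
  have hk0 : k ≠ 0 := by
    rintro rfl
    exact hQ.ne_top (Ideal.absNorm_eq_one_iff.mp (by simpa using hk))
  refine le_antisymm hle' ?_
  rw [hk]
  exact Nat.le_self_pow hk0 p

lemma unram_aux (p : ℕ) (hp : p.Prime) (Q : Ideal (𝓞 L))
    (h : Q ^ 2 ∣ Ideal.span {(p : 𝓞 L)}) : differentIdeal ℤ (𝓞 L) ≤ Q := by
  have hpm : (Ideal.span {(p : ℤ)}).IsMaximal := by
    have : Fact p.Prime := ⟨hp⟩
    exact Int.ideal_span_isMaximal_of_prime p
  have hpb : Ideal.span {(p : ℤ)} ≠ ⊥ := by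
    rw [Ne, Ideal.span_singleton_eq_bot]
    exact_mod_cast hp.ne_zero
  have h2 : Q ^ 2 ∣ (Ideal.span {(p : ℤ)}).map (algebraMap ℤ (𝓞 L)) := by
    rw [Ideal.map_span, Set.image_singleton]
    simpa only [map_natCast] using h
  have h3 := pow_sub_one_dvd_differentIdeal ℤ Q 2 hpb h2
  rw [pow_one] at h3
  exact Ideal.le_of_dvd h3

lemma mem_aux (θ : 𝓞 L) (hθ : Algebra.adjoin ℚ {(algebraMap (𝓞 L) L θ)} = ⊤) :
    Polynomial.aeval θ (Polynomial.derivative (minpoly ℤ θ)) ∈ conductor ℤ θ ∧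
    Polynomial.aeval θ (Polynomial.derivative (minpoly ℤ θ)) ∈ differentIdeal ℤ (𝓞 L) := by
  have hDm := Ideal.mem_span_singleton_self
    (Polynomial.aeval θ (Polynomial.derivative (minpoly ℤ θ)))
  rw [← conductor_mul_differentIdeal ℤ ℚ L θ hθ] at hDm
  exact ⟨Ideal.mul_le_left hDm,
    Ideal.mul_le_right hDm⟩

lemma two_primes (θ : 𝓞 L) (hθ : Algebra.adjoin ℚ {(algebraMap (𝓞 L) L θ)} = ⊤)
    (hn : Module.finrank ℚ L ≠ 1) (D : 𝓞 L)
    (hD : D = Polynomial.aeval θ (Polynomial.derivative (minpoly ℤ θ)))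
    (p : ℕ) (hp : p.Prime)
    (h : ∀ Q : Ideal (𝓞 L), Q.IsPrime → (p : 𝓞 L) ∈ Q → D ∉ Q ∧ θ ^ p - θ ∈ Q) :
    ∃ F G : Ideal (𝓞 L), (Prime F ∧ Ideal.absNorm F = p) ∧ (Prime G ∧ Ideal.absNorm G = p) ∧
      F ≠ G := by
  obtain ⟨hDc, hDd⟩ := mem_aux θ hθ
  rw [← hD] at hDc hDd
  have hspan : Ideal.absNorm (Ideal.span {(p : 𝓞 L)}) = p ^ Module.finrank ℚ L := by
    rw [Ideal.absNorm_span_natCast, RingOfIntegers.rank]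
  have hp0 : (p : 𝓞 L) ≠ 0 := by exact_mod_cast hp.ne_zero
  have hnorm : ∀ Q : Ideal (𝓞 L), Q.IsPrime → (p : 𝓞 L) ∈ Q → Ideal.absNorm Q = p :=
    fun Q hQ hpQ => norm_aux θ D hDc p hp Q hQ hpQ (h Q hQ hpQ).1 (h Q hQ hpQ).2
  have hprime : ∀ Q : Ideal (𝓞 L), Q.IsPrime → (p : 𝓞 L) ∈ Q → Prime Q := fun Q hQ hpQ =>
    Ideal.prime_of_isPrime (fun h => hp0 (by simpa [h] using hpQ)) hQ
  have hne1 : Ideal.span {(p : 𝓞 L)} ≠ ⊤ := by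
    intro h
    rw [h, Ideal.absNorm_top] at hspan
    exact absurd hspan.symm (Nat.one_lt_pow Module.finrank_pos.ne' hp.one_lt).ne'
  obtain ⟨Q, hQm, hQ⟩ := Ideal.exists_le_maximal _ hne1
  have hpQ := (Ideal.span_singleton_le_iff_mem _).mp hQ
  obtain ⟨J, hJ⟩ := Ideal.dvd_iff_le.mpr hQ
  have hJ1 : J ≠ ⊤ := by
    rintro rfl
    rw [hJ, Ideal.mul_top, hnorm Q hQm.isPrime hpQ] at hspan
    exact hn (Nat.pow_right_injective hp.two_le (by simpa using hspan.symm))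
  obtain ⟨Q', hQm', hQ'⟩ := Ideal.exists_le_maximal _ hJ1
  have hpQ' : (p : 𝓞 L) ∈ Q' := by
    rw [← Ideal.span_singleton_le_iff_mem, hJ]
    exact Ideal.mul_le_right.trans hQ'
  refine ⟨Q, Q', ⟨hprime Q hQm.isPrime hpQ, hnorm Q hQm.isPrime hpQ⟩,
    ⟨hprime Q' hQm'.isPrime hpQ', hnorm Q' hQm'.isPrime hpQ'⟩, ?_⟩
  rintro rfl
  refine (h Q hQm.isPrime hpQ).1 (unram_aux p hp Q ?_ hDd)
  rw [hJ, pow_two]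
  exact mul_dvd_mul_left _ (Ideal.dvd_iff_le.mpr hQ')
end

theorem statement10 (K : Type*) [Field K] [NumberField K] (c : 𝓞 K)
    (h : {P : Ideal (𝓞 K) | P ≠ ⊥ ∧ P.IsPrime ∧
        c ^ ringChar ((𝓞 K) ⧸ P) - c ∉ P}.Finite) :
    ∃ n : ℤ, (n : 𝓞 K) = c := by
  classical
  let L := IntermediateField.adjoin ℚ {(c : K)}
  by_cases hn : Module.finrank ℚ L = 1
  · have hbot : L = ⊥ := IntermediateField.finrank_eq_one_iff.mp hn
    have hc : (c : K) ∈ (⊥ : IntermediateField ℚ K) := by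
      rw [← hbot]; exact IntermediateField.mem_adjoin_simple_self ℚ _
    obtain ⟨q, hq⟩ := IntermediateField.mem_bot.mp hc
    have hint : IsIntegral ℤ q := by
      rw [← isIntegral_algebraMap_iff (algebraMap ℚ K).injective, hq]
      exact c.isIntegral_coe
    obtain ⟨n, hn⟩ := IsIntegrallyClosed.isIntegral_iff.mp hint
    refine ⟨n, ?_⟩
    apply RingOfIntegers.coe_injective
    refine Eq.trans ?_ hq
    rw [← hn]
    simp
  exfalso
  have hcL : IsIntegral ℤ (IntermediateField.AdjoinSimple.gen ℚ (c : K)) := by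
    rw [← isIntegral_algebraMap_iff (algebraMap L K).injective]
    simpa using c.isIntegral_coe
  let θ : 𝓞 L := ⟨IntermediateField.AdjoinSimple.gen ℚ (c : K), hcL⟩
  have hθc : algebraMap (𝓞 L) (𝓞 K) θ = c := by
    apply RingOfIntegers.coe_injective
    rfl
  have hadj : Algebra.adjoin ℚ {(algebraMap (𝓞 L) L θ)} = ⊤ := by
    have h2 := (IntermediateField.adjoin.powerBasis
      (Algebra.IsIntegral.isIntegral (R := ℚ) (c : K))).adjoin_gen_eq_top
    rw [IntermediateField.adjoin.powerBasis_gen] at h2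
    exact h2
  set D : 𝓞 L := Polynomial.aeval θ (Polynomial.derivative (minpoly ℤ θ)) with hD
  have hD0 : D ≠ 0 := by
    have hsep := (minpoly.irreducible (Algebra.IsIntegral.isIntegral (R := ℚ)
      (algebraMap (𝓞 L) L θ))).separable
    have h1 := hsep.aeval_derivative_ne_zero (minpoly.aeval ℚ (algebraMap (𝓞 L) L θ))
    intro h0
    apply h1
    rw [minpoly.isIntegrallyClosed_eq_field_fractions ℚ L (RingOfIntegers.isIntegral θ),
      Polynomial.derivative_map, Polynomial.aeval_map_algebraMap,
      Polynomial.aeval_algebraMap_apply, ← hD, h0, map_zero]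
  let M : ℕ := (∏ P ∈ h.toFinset, Ideal.absNorm P) * Ideal.absNorm (Ideal.span {D})
  have hM : M ≠ 0 := by
    refine mul_ne_zero (Finset.prod_ne_zero_iff.mpr fun P hP => ?_) ?_
    · rw [Ne, Ideal.absNorm_eq_zero_iff]
      exact (h.mem_toFinset.mp hP).1
    · rw [Ne, Ideal.absNorm_eq_zero_iff]
      simpa using hD0
  have key : ∀ p : ℕ, ∃ F G : Ideal (𝓞 L), p.Prime → ¬ p ∣ M →
      (Prime F ∧ Ideal.absNorm F = p) ∧ (Prime G ∧ Ideal.absNorm G = p) ∧ F ≠ G := by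
    intro p
    by_cases hp : p.Prime
    swap
    · exact ⟨⊥, ⊥, fun h => absurd h hp⟩
    by_cases hpM : p ∣ M
    · exact ⟨⊥, ⊥, fun _ h => absurd hpM h⟩
    have hcop : IsCoprime (p : ℤ) (M : ℤ) :=
      Nat.isCoprime_iff_coprime.mpr ((Nat.Prime.coprime_iff_not_dvd hp).mpr hpM)
    have hno : ∀ (R : Type _) [CommRing R] (I : Ideal R), I.IsPrime → (p : R) ∈ I → (M : R) ∉ I := by
      intro R _ I hI h1 h2
      obtain ⟨u, v, huv⟩ := hcop
      have h3 : (u : R) * p + v * M = 1 := by exact_mod_cast congrArg (Int.cast : ℤ → R) huv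
      exact hI.ne_top ((Ideal.eq_top_iff_one _).mpr
        (h3 ▸ I.add_mem (I.mul_mem_left _ h1) (I.mul_mem_left _ h2)))
    obtain ⟨F, G, hFG⟩ := two_primes θ hadj hn D hD p hp (by
      intro Q hQ hpQ
      refine ⟨fun hDQ => hno _ Q hQ hpQ ?_, ?_⟩
      · simp only [M, Nat.cast_mul]
        exact Q.mul_mem_left _ ((Ideal.span_singleton_le_iff_mem _).mpr hDQ (Ideal.absNorm_mem _))
      · obtain ⟨P, hP, hPQ⟩ := Ideal.exists_ideal_over_prime_of_isIntegral_of_isDomain (S := 𝓞 K) Q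
          (by
            rw [(RingHom.injective_iff_ker_eq_bot _).mp
              (FaithfulSMul.algebraMap_injective (𝓞 L) (𝓞 K))]
            exact bot_le)
        have hpP : (p : 𝓞 K) ∈ P := by
          rw [← hPQ, Ideal.mem_comap, map_natCast] at hpQ
          exact hpQ
        have hP0 : P ≠ ⊥ := by
          rintro rfl
          exact hp.ne_zero (by exact_mod_cast (Ideal.mem_bot.mp hpP))
        have hchar : ringChar (𝓞 K ⧸ P) = p := by
          have : Nontrivial (𝓞 K ⧸ P) := Ideal.Quotient.nontrivial_iff.mpr hP.ne_top
          have : CharP (𝓞 K ⧸ P) p := by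
            refine (CharP.charP_iff_prime_eq_zero hp).mpr ?_
            rw [← map_natCast (Ideal.Quotient.mk P)]
            exact Ideal.Quotient.eq_zero_iff_mem.mpr hpP
          exact ringChar.eq _ p
        rw [← hPQ, Ideal.mem_comap, map_sub, map_pow, hθc]
        by_contra hbad
        have hmem : P ∈ h.toFinset := by
          rw [h.mem_toFinset]
          exact ⟨hP0, hP, by rwa [hchar]⟩
        refine hno _ P hP hpP ?_
        simp only [M, Nat.cast_mul, Nat.cast_prod]
        refine P.mul_mem_right _ (P.mem_of_dvd (Finset.dvd_prod_of_mem _ hmem) (Ideal.absNorm_mem P)))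
    exact ⟨F, G, fun _ _ => hFG⟩
  choose F G hFG using key
  exact counting M hM F G (fun p h1 h2 => (hFG p h1 h2).1) (fun p h1 h2 => (hFG p h1 h2).2.1)
    fun p h1 h2 => (hFG p h1 h2).2.2
end

section
/- Let k be a finite field, let X be a scheme, and let f : X → Spec k be a morphism of schemes that is quasi-compact and locally of finite type. Then the set of k-rational points of X, i.e., the set of scheme morphisms s : Spec k → X with f ∘ s = id_{Spec k}, is finite. -/
open AlgebraicGeometry CategoryTheory

lemma finite_retractions (k A : Type) [Field k] [Finite k] [CommRing A] (g : k →+* A)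
    (hg : g.FiniteType) : Finite {φ : A →+* k // φ.comp g = RingHom.id k} := by
  algebraize [g]
  obtain ⟨S, hS⟩ := (inferInstance : Algebra.FiniteType k A).out
  refine Finite.of_injective (β := S → k) (fun φ a => φ.1 a) ?_
  rintro ⟨φ, hφ⟩ ⟨ψ, hψ⟩ h
  let φ' : A →ₐ[k] k := { φ with commutes' := fun r => congr($hφ r) }
  let ψ' : A →ₐ[k] k := { ψ with commutes' := fun r => congr($hψ r) }
  have : φ' = ψ' := AlgHom.ext_of_adjoin_eq_top hS (fun a ha => congrFun h ⟨a, ha⟩)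
  ext a
  exact congr($this a)

lemma finite_sections_affine (k : Type) [Field k] [Finite k] (R : CommRingCat.{0})
    (f : Spec R ⟶ Spec (CommRingCat.of k)) [LocallyOfFiniteType f] :
    Finite {s : Spec (CommRingCat.of k) ⟶ Spec R // s ≫ f = 𝟙 (Spec (CommRingCat.of k))} := by
  obtain ⟨g, rfl⟩ := Spec.map_surjective f
  have hg : RingHom.FiniteType g.hom :=
    (HasRingHomProperty.Spec_iff (P := @LocallyOfFiniteType)).mp ‹_›
  have := finite_retractions k R g.hom hg
  refine Finite.of_surjective
    (α := {φ : R →+* k // φ.comp g.hom = RingHom.id k})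
    (fun φ => ⟨Spec.map (CommRingCat.ofHom φ.1), ?_⟩) ?_
  · rw [← Spec.map_comp, ← Spec.map_id]
    congr 1
    ext x
    exact congr($(φ.2) x)
  · rintro ⟨s, hs⟩
    obtain ⟨φ, rfl⟩ := Spec.map_surjective s
    rw [← Spec.map_comp, ← Spec.map_id] at hs
    have h := Spec.map_injective hs
    exact ⟨⟨φ.hom, by ext x; exact congr(($h).hom x)⟩, rfl⟩

/-- if `k` is a finite field and `f : X ⟶ Spec k` is a quasi-compact morphism
of schemes that is locally of finite type, then the set of `k`-rational points of `X`
(sections of `f`) is finite. -/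
theorem statement14 (k : Type) [Field k] [Finite k]
    (X : Scheme.{0}) (f : X ⟶ Spec (CommRingCat.of k))
    [QuasiCompact f] [LocallyOfFiniteType f] :
    Finite {s : Spec (CommRingCat.of k) ⟶ X // s ≫ f = 𝟙 (Spec (CommRingCat.of k))} := by
  have : CompactSpace X := QuasiCompact.compactSpace_of_compactSpace f
  let U := X.affineCover.finiteSubcover
  have hU : ∀ i, IsAffine (U.X i) := fun i => by
    dsimp [U]; infer_instance
  let p (i : U.I₀) : Spec Γ(U.X i, ⊤) ⟶ X := (U.X i).isoSpec.inv ≫ U.f i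
  have (i : U.I₀) : Finite {s : Spec (CommRingCat.of k) ⟶ Spec Γ(U.X i, ⊤) //
      s ≫ (p i ≫ f) = 𝟙 (Spec (CommRingCat.of k))} := by
    have : LocallyOfFiniteType (p i ≫ f) := by dsimp only [p]; infer_instance
    exact finite_sections_affine k _ _
  refine Finite.of_surjective
    (α := Σ i : U.I₀, {s : Spec (CommRingCat.of k) ⟶ Spec Γ(U.X i, ⊤) //
      s ≫ (p i ≫ f) = 𝟙 (Spec (CommRingCat.of k))})
    (fun s => ⟨s.2.1 ≫ p s.1, by simpa using s.2.2⟩) ?_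
  rintro ⟨s, hs⟩
  let x : Spec (CommRingCat.of k) := IsLocalRing.closedPoint k
  have hr : Set.range s ⊆ Set.range (U.f (U.idx (s x))) := by
    rintro _ ⟨y, rfl⟩
    have hy : y = x := Subsingleton.elim (α := PrimeSpectrum k) y x
    rw [hy]
    exact U.covers (s x)
  have hl : (IsOpenImmersion.lift (U.f (U.idx (s x))) s hr ≫ (U.X _).isoSpec.hom) ≫
      p (U.idx (s x)) = s := by
    simp [p]
  refine ⟨⟨U.idx (s x), ⟨_, ?_⟩⟩, Subtype.ext hl⟩
  rw [← Category.assoc, hl, hs]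
end

section
/- Let R be a local commutative ring with maximal ideal m, and assume R is m-adically separated and complete (that is, the canonical map from R to the inverse limit of the quotients R/m^k is an isomorphism). Then for every scheme X, the canonical map from the set of scheme morphisms Spec R → X to the inverse limit over k ≥ 1 of the sets of scheme morphisms Spec(R/m^k) → X (given by composing with the morphisms induced by the projections R → R/m^k) is a bijection. -/
open AlgebraicGeometry CategoryTheory IsLocalRing

noncomputable section

variable (R : Type) [CommRing R] [IsLocalRing R]

/-- The transition morphism `Spec (R ⧸ m ^ (k+1)) ⟶ Spec (R ⧸ m ^ (l+1))` for `k ≤ l`,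
induced by the canonical projection `R ⧸ m ^ (l+1) → R ⧸ m ^ (k+1)`. -/
def specTransition (k l : ℕ) (h : k ≤ l) :
    Spec (CommRingCat.of (R ⧸ maximalIdeal R ^ (k + 1))) ⟶
      Spec (CommRingCat.of (R ⧸ maximalIdeal R ^ (l + 1))) :=
  Spec.map (CommRingCat.ofHom
    (Ideal.Quotient.factor (S := maximalIdeal R ^ (l + 1)) (T := maximalIdeal R ^ (k + 1))
      (Ideal.pow_le_pow_right (by omega))))

/-- The canonical morphism `Spec (R ⧸ m ^ (k+1)) ⟶ Spec R`. -/
def specProj (k : ℕ) :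
    Spec (CommRingCat.of (R ⧸ maximalIdeal R ^ (k + 1))) ⟶ Spec (CommRingCat.of R) :=
  Spec.map (CommRingCat.ofHom (Ideal.Quotient.mk (maximalIdeal R ^ (k + 1))))

lemma specTransition_comp_specProj (k l : ℕ) (h : k ≤ l) :
    specTransition R k l h ≫ specProj R l = specProj R k := by
  dsimp [specTransition, specProj]
  rw [← Spec.map_comp]
  congr 1

/-- The canonical map from `X (Spec R)` to the inverse limit of the `X (Spec (R ⧸ m ^ k))`,
sending a morphism `φ : Spec R ⟶ X` to the compatible family of its composites with the
canonical morphisms `Spec (R ⧸ m ^ (k+1)) ⟶ Spec R`. -/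
def toInverseLimit (X : Scheme.{0}) (φ : Spec (CommRingCat.of R) ⟶ X) :
    { s : ∀ k : ℕ, Spec (CommRingCat.of (R ⧸ maximalIdeal R ^ (k + 1))) ⟶ X //
        ∀ (k l : ℕ) (h : k ≤ l), specTransition R k l h ≫ s l = s k } :=
  ⟨fun k => specProj R k ≫ φ, by
    intro k l h
    rw [← Category.assoc, specTransition_comp_specProj]⟩

lemma quotNontrivial (k : ℕ) : Nontrivial (R ⧸ maximalIdeal R ^ (k + 1)) :=
  Ideal.Quotient.nontrivial_iff.mpr fun h =>
    (maximalIdeal.isMaximal R).ne_top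
      (top_le_iff.mp (h ▸ Ideal.pow_le_self (Nat.succ_ne_zero k)))

lemma quotLocal (k : ℕ) : IsLocalRing (R ⧸ maximalIdeal R ^ (k + 1)) :=
  haveI := quotNontrivial R k
  IsLocalRing.of_surjective' (Ideal.Quotient.mk _) Ideal.Quotient.mk_surjective

/-- A morphism out of the spectrum of a local ring factors through any affine open
containing the image of the closed point. -/
lemma exists_factor (S : Type) [CommRing S] [IsLocalRing S] {X : Scheme.{0}}
    (f : Spec (CommRingCat.of S) ⟶ X) {U : X.Opens} (hU : IsAffineOpen U)
    (h : f (closedPoint S) ∈ U) :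
    ∃ g : Γ(X, U) →+* S, Spec.map (CommRingCat.ofHom g) ≫ hU.fromSpec = f := by
  have h1 : Set.range f ⊆ Set.range hU.fromSpec := by
    rw [hU.range_fromSpec]
    rintro _ ⟨y, rfl⟩
    have h2 := Scheme.preimage_eq_top_of_closedPoint_mem (R := CommRingCat.of S) f h
    have h3 : y ∈ f ⁻¹ᵁ U := by rw [h2]; trivial
    exact h3
  obtain ⟨g, hg⟩ := Spec.map_surjective (IsOpenImmersion.lift hU.fromSpec f h1)
  refine ⟨g.hom, ?_⟩
  rw [CommRingCat.ofHom_hom, hg, IsOpenImmersion.lift_fac]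

lemma map_closedPoint {S T : Type} [CommRing S] [IsLocalRing S] [CommRing T] [IsLocalRing T]
    (g : S →+* T) (hg : Function.Surjective g) :
    Spec.map (CommRingCat.ofHom g) (closedPoint T) = closedPoint S := by
  haveI := IsLocalHom.of_surjective g hg
  exact IsLocalRing.comap_closedPoint g

lemma fromSpec_cancel {S : Type} [CommRing S] {X : Scheme.{0}} {U : X.Opens}
    (hU : IsAffineOpen U) (g g' : Γ(X, U) →+* S)
    (h : Spec.map (CommRingCat.ofHom g) ≫ hU.fromSpec =
      Spec.map (CommRingCat.ofHom g') ≫ hU.fromSpec) : g = g' := by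
  rw [cancel_mono] at h
  exact congrArg CommRingCat.Hom.hom (Spec.map_injective h)

/-- if `R` is a local ring which is separated and complete for the topology
defined by its maximal ideal `m` (i.e. `R ≃ lim R ⧸ m ^ k`), then for every scheme `X` the
canonical map `X (Spec R) → lim_k X (Spec (R ⧸ m ^ k))` is a bijection. -/
theorem statement15 [IsAdicComplete (maximalIdeal R) R] (X : Scheme.{0}) :
    Function.Bijective (toInverseLimit R X) := by
  haveI := quotLocal R
  constructor
  · intro φ ψ h
    have hk : ∀ k, specProj R k ≫ φ = specProj R k ≫ ψ := fun k =>
      congrFun (congrArg Subtype.val h) k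
    have hpt : ∀ χ : Spec (CommRingCat.of R) ⟶ X,
        (specProj R 0 ≫ χ) (closedPoint (R ⧸ maximalIdeal R ^ (0 + 1))) =
          χ (closedPoint R) := by
      intro χ
      refine (Scheme.Hom.comp_apply _ _ _).trans ?_
      exact congrArg χ (map_closedPoint _ Ideal.Quotient.mk_surjective)
    have hpp : φ (closedPoint R) = ψ (closedPoint R) := by
      rw [← hpt φ, ← hpt ψ, hk 0]
    obtain ⟨U, hU, hx, -⟩ := exists_isAffineOpen_mem_and_subset
      (TopologicalSpace.Opens.mem_top (φ (closedPoint R)))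
    obtain ⟨a, ha⟩ := exists_factor R φ hU hx
    obtain ⟨b, hb⟩ := exists_factor R ψ hU (hpp ▸ hx)
    have hab : a = b := by
      have key : ∀ k, (Ideal.Quotient.mk (maximalIdeal R ^ (k + 1))).comp a =
          (Ideal.Quotient.mk (maximalIdeal R ^ (k + 1))).comp b := by
        intro k
        apply fromSpec_cancel hU
        have := hk k
        rw [← ha, ← hb] at this
        simpa only [specProj, CommRingCat.ofHom_comp, Spec.map_comp, Category.assoc] using this
      apply DFunLike.coe_injective
      apply IsHausdorff.StrictMono.funext' (maximalIdeal R) (a := fun n => n + 1)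
        (strictMono_id.add_const 1)
      intro n x
      exact RingHom.congr_fun (key n) x
    rw [← ha, ← hb, hab]
  · rintro ⟨s, hs⟩
    obtain ⟨U, hU, hx, -⟩ := exists_isAffineOpen_mem_and_subset
      (TopologicalSpace.Opens.mem_top (s 0 (closedPoint (R ⧸ maximalIdeal R ^ (0 + 1)))))
    have hpt : ∀ k, s k (closedPoint (R ⧸ maximalIdeal R ^ (k + 1))) ∈ U := by
      intro k
      have e : specTransition R 0 k (Nat.zero_le k)
          (closedPoint (R ⧸ maximalIdeal R ^ (0 + 1))) =
          closedPoint (R ⧸ maximalIdeal R ^ (k + 1)) :=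
        map_closedPoint _ (Ideal.Quotient.factor_surjective _)
      have e2 : (specTransition R 0 k (Nat.zero_le k) ≫ s k)
          (closedPoint (R ⧸ maximalIdeal R ^ (0 + 1))) =
          s k (closedPoint (R ⧸ maximalIdeal R ^ (k + 1))) :=
        (Scheme.Hom.comp_apply _ _ _).trans (congrArg (s k) e)
      rw [hs 0 k (Nat.zero_le k)] at e2
      exact e2 ▸ hx
    choose f hf using fun k => exists_factor _ (s k) hU (hpt k)
    have ha : StrictMono (fun n : ℕ => n + 1) := strictMono_id.add_const 1
    have hcomp : ∀ {m : ℕ}, (Ideal.Quotient.factorPow (maximalIdeal R)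
        (ha.monotone m.le_succ)).comp (f (m + 1)) = f m := by
      intro m
      apply fromSpec_cancel hU
      rw [CommRingCat.ofHom_comp, Spec.map_comp, Category.assoc, hf, hf]
      exact hs m (m + 1) m.le_succ
    refine ⟨Spec.map (CommRingCat.ofHom (IsAdicComplete.StrictMono.liftRingHom
      (maximalIdeal R) ha f hcomp)) ≫ hU.fromSpec, ?_⟩
    apply Subtype.ext
    funext k
    change specProj R k ≫ _ = s k
    have := IsAdicComplete.StrictMono.mk_comp_liftRingHom (maximalIdeal R) ha f hcomp (n := k)
    rw [← hf k, specProj, ← Category.assoc, ← Spec.map_comp, ← CommRingCat.ofHom_comp]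
    exact congrArg (fun g => Spec.map (CommRingCat.ofHom g) ≫ hU.fromSpec) this

end
end
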